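/- arXiv:2509.20255 — 3 statements merged into one kernel-verified Lean document; each statement's English description precedes it below -/
import Mathlib

section
/- Every 7×11 sign matrix has at most 56 2-neighborly plain travels. (Equivalently, every rank 7 Lawrence oriented matroid on 11 elements has at most c_7(11,2) = 112 2-neighborly reorientations, since each k-neighborly plain travel corresponds to exactly two k-neighborly reorientations.) -/
/-- An `r × n` sign matrix: entries in `{+1, -1}` (1-indexed: `1 ≤ i ≤ r`, `1 ≤ j ≤ n`). -/
def IsSignMatrix (r n : ℕ) (A : ℕ → ℕ → ℤ) : Prop :=
  ∀ i j, 1 ≤ i → i ≤ r → 1 ≤ j → j ≤ n → A i j = 1 ∨ A i j = -1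

/-- `A_S`: the matrix obtained from `A` by negating every entry of each column in `S`. -/
def reorient (A : ℕ → ℕ → ℤ) (S : Finset ℕ) : ℕ → ℕ → ℤ :=
  fun i j => if j ∈ S then -A i j else A i j

/-- The first column `c'` with `c < c' ≤ n` where row `i` changes sign relative to
entry `a_{i,c}`, if such a column exists. -/
def rowChange (A : ℕ → ℕ → ℤ) (n i c : ℕ) : Option ℕ :=
  (List.range (n + 1)).find? fun c' => decide (c < c' ∧ A i c' ≠ A i c)

/-- `ttEntry A n i` is the column at which the top travel of `A` enters row `i`
(rows and columns 1-indexed): the travel enters row 1 at column 1, and, having entered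
row `i` at column `c`, it enters row `i+1` at the first sign change of row `i` after
column `c` (if any).  The value `some` at the "virtual" row `r+1` means the top travel
had a sign change in the bottom row `r`, i.e. the top travel is positive. -/
def ttEntry (A : ℕ → ℕ → ℤ) (n : ℕ) : ℕ → Option ℕ
  | 0 => none
  | 1 => some 1
  | i + 2 => (ttEntry A n (i + 1)).bind (rowChange A n (i + 1))

/-- The top travel of the `r × n` sign matrix `A` is positive: it contains two
horizontally consecutive entries of row `r` with opposite signs. -/
def ttPositive (A : ℕ → ℕ → ℤ) (r n : ℕ) : Prop :=
  (ttEntry A n (r + 1)).isSome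

/-- `A` is `k`-neighborly: for every set `S` of at most `k` columns, the top travel
of `A_S` is not positive. -/
def IsNeighborly (A : ℕ → ℕ → ℤ) (r n k : ℕ) : Prop :=
  ∀ S : Finset ℕ, S ⊆ Finset.Icc 1 n → S.card ≤ k → ¬ ttPositive (reorient A S) r n

/-- A plain travel of an `r × n` sign matrix, identified with the set `D` of columns of
its downward (vertical) moves: the columns `2 ≤ j₁ < ⋯ < j_{s-1} ≤ n` with `s ≤ r`. -/
def IsPlainTravel (r n : ℕ) (D : Finset ℕ) : Prop :=
  D ⊆ Finset.Icc 2 n ∧ D.card ≤ r - 1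

/-- The top travel of `A` follows exactly the plain travel with downward-move columns `D`:
it makes its downward moves precisely at the columns of `D` (entering rows `2, …, |D|+1`
there) and then ends at column `n` in row `|D|+1` without a further sign change. -/
def ttFollows (A : ℕ → ℕ → ℤ) (n : ℕ) (D : Finset ℕ) : Prop :=
  ttEntry A n (D.card + 2) = none ∧
  ∀ c, c ∈ D ↔ ∃ i, 2 ≤ i ∧ i ≤ D.card + 1 ∧ ttEntry A n i = some c

/-- The plain travel `D` of `A` is `k`-neighborly: there is a set `R` of columns such that
the top travel of `A_R` follows exactly the path `D` and `A_R` is a `k`-neighborly matrix. -/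
def IsNeighborlyTravel (A : ℕ → ℕ → ℤ) (r n k : ℕ) (D : Finset ℕ) : Prop :=
  ∃ R : Finset ℕ, R ⊆ Finset.Icc 1 n ∧ ttFollows (reorient A R) n D ∧
    IsNeighborly (reorient A R) r n k

/-! ### The finite computation

Reorientations are encoded by words `w < 1024`; a set of words is a natural number below `2 ^ 1024`. -/

/-- An encoded circuit: first column, then for each row the list of branching variables met between
two consecutive columns, together with the next column. -/
abbrev NbEnc := ℕ × List (List ℕ × ℕ)

def nbOnes : ℕ := Nat.sub (Nat.pow 2 1024) 1

/-- The truth table of the sign of column `c`. -/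
def nbX (c : ℕ) : ℕ :=
  Nat.rec 0 (fun c _ => Nat.rec 0 (fun k _ =>
    Nat.mul (Nat.div nbOnes (Nat.succ (Nat.pow 2 (Nat.pow 2 k)))) (Nat.pow 2 (Nat.pow 2 k))) c) c

/-- The truth table (a constant) of the value of variable `v` in the assignment `m`. -/
def nbE (m v : ℕ) : ℕ := Nat.mul nbOnes (Nat.land (Nat.shiftRight m v) 1)

def nbKappa (m : ℕ) (vs : List ℕ) : ℕ → ℕ :=
  List.rec (fun κ => κ) (fun v _ ih κ => ih (Nat.xor κ (nbE m v))) vs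

def nbFs (m : ℕ) (st : List (List ℕ × ℕ)) : ℕ → ℕ → List ℕ :=
  List.rec (fun κ c => [Nat.xor (nbX c) κ])
    (fun s _ ih κ c => Nat.xor (nbX c) κ :: ih (nbKappa m s.1 (Nat.xor κ nbOnes)) s.2) st

def nbMaj (a b c : ℕ) : ℕ := Nat.lor (Nat.land a b) (Nat.land (Nat.xor a b) c)

def nbPar (a b c : ℕ) : ℕ := Nat.xor (Nat.xor a b) c

def nbComb3 (s r p : ℕ) : ℕ := Nat.land (Nat.xor r p) (Nat.lor r s)

def nbComb2 (s c p q : ℕ) : ℕ := nbComb3 s (Nat.xor q (Nat.land p c)) (Nat.xor p c)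

def nbComb1 (s c1 c2 c3 h : ℕ) : ℕ :=
  nbComb2 (Nat.xor s h) (Nat.land s h) (nbPar c1 c2 c3) (nbMaj c1 c2 c3)

def nbComb0 (s1 c1 s2 c2 g h : ℕ) : ℕ := nbComb1 (nbPar s1 s2 g) c1 c2 (nbMaj s1 s2 g) h

/-- Words for which three, four or five of the eight bits are set. -/
def nbGood8 : List ℕ → ℕ
  | [a, b, c, d, e, f, g, h] =>
    nbComb0 (nbPar a b c) (nbMaj a b c) (nbPar d e f) (nbMaj d e f) g h
  | _ => nbOnes

def nbBall (m : ℕ) (e : NbEnc) : ℕ := nbGood8 (nbFs m e.2 0 e.1)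

def nbRestrict (m : ℕ) (L : List NbEnc) : ℕ → ℕ :=
  List.rec (fun G => G) (fun e _ ih G => ih (Nat.land G (nbBall m e))) L

/-- Clear the lowest set bit. -/
def nbClr (G : ℕ) : ℕ := Nat.land G (Nat.sub G 1)

def nbClr2 (G : ℕ) : ℕ := nbClr (nbClr G)

def nbClr4 (G : ℕ) : ℕ := nbClr2 (nbClr2 G)

def nbClr8 (G : ℕ) : ℕ := nbClr4 (nbClr4 G)

/-- At most 56 bits of `G` are set. -/
def nbLeq (G : ℕ) : Bool :=
  Nat.beq (nbClr8 (nbClr8 (nbClr8 (nbClr8 (nbClr8 (nbClr8 (nbClr8 G))))))) 0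

/-- The search tree. -/
def nbGo (lv : List (List NbEnc)) : ℕ → ℕ → ℕ → Bool :=
  List.rec (fun _ _ _ => false) (fun L _ ih p m G =>
    (fun G' => cond (nbLeq G') true
      (cond (ih (Nat.mul 2 p) m G') (ih (Nat.mul 2 p) (Nat.lor m p) G') false))
    (nbRestrict m L G)) lv


/-- The circuits that involve only the first `k` variables, for `k ≤ 4`. -/
def nbFirst : List NbEnc := [
   (1, [([], 3), ([], 4), ([], 5), ([], 6), ([], 8), ([], 9), ([], 10)]),
   (1, [([], 3), ([], 4), ([], 5), ([], 6), ([], 8), ([], 9), ([], 11)]),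
   (2, [([], 3), ([], 4), ([], 5), ([], 6), ([], 8), ([], 9), ([], 10)]),
   (2, [([], 3), ([], 4), ([], 5), ([], 6), ([], 8), ([], 9), ([], 11)]),
   (1, [([], 3), ([], 4), ([], 5), ([0], 7), ([], 8), ([], 9), ([], 10)]),
   (1, [([], 3), ([], 4), ([], 5), ([0], 7), ([], 8), ([], 9), ([], 11)]),
   (2, [([], 3), ([], 4), ([], 5), ([0], 7), ([], 8), ([], 9), ([], 10)]),
   (2, [([], 3), ([], 4), ([], 5), ([0], 7), ([], 8), ([], 9), ([], 11)]),
   (1, [([], 3), ([], 4), ([], 5), ([], 6), ([], 8), ([1], 10), ([], 11)]),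
   (1, [([], 3), ([], 4), ([], 5), ([0], 7), ([], 8), ([1], 10), ([], 11)]),
   (2, [([], 3), ([], 4), ([], 5), ([], 6), ([], 8), ([1], 10), ([], 11)]),
   (2, [([], 3), ([], 4), ([], 5), ([0], 7), ([], 8), ([1], 10), ([], 11)]),
   (1, [([], 2), ([2], 4), ([], 5), ([], 6), ([], 8), ([], 9), ([], 10)]),
   (1, [([], 2), ([2], 4), ([], 5), ([], 6), ([], 8), ([], 9), ([], 11)]),
   (1, [([], 2), ([2], 4), ([], 5), ([], 6), ([], 8), ([1], 10), ([], 11)]),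
   (1, [([], 2), ([2], 4), ([], 5), ([0], 7), ([], 8), ([], 9), ([], 10)]),
   (1, [([], 2), ([2], 4), ([], 5), ([0], 7), ([], 8), ([], 9), ([], 11)]),
   (1, [([], 2), ([2], 4), ([], 5), ([0], 7), ([], 8), ([1], 10), ([], 11)]),
   (1, [([], 2), ([2], 4), ([3], 6), ([0], 7), ([], 8), ([], 9), ([], 10)]),
   (1, [([], 2), ([2], 4), ([3], 6), ([0], 7), ([], 8), ([], 9), ([], 11)]),
   (1, [([], 2), ([2], 4), ([3], 6), ([0], 7), ([], 8), ([1], 10), ([], 11)]),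
   (1, [([], 3), ([], 4), ([3], 6), ([0], 7), ([], 8), ([], 9), ([], 10)]),
   (1, [([], 3), ([], 4), ([3], 6), ([0], 7), ([], 8), ([], 9), ([], 11)]),
   (1, [([], 3), ([], 4), ([3], 6), ([0], 7), ([], 8), ([1], 10), ([], 11)]),
   (2, [([], 3), ([], 4), ([3], 6), ([0], 7), ([], 8), ([], 9), ([], 10)]),
   (2, [([], 3), ([], 4), ([3], 6), ([0], 7), ([], 8), ([], 9), ([], 11)]),
   (2, [([], 3), ([], 4), ([3], 6), ([0], 7), ([], 8), ([1], 10), ([], 11)])]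

/-- The circuits that become available after 5, 6, ... variables. -/
def nbRest : List (List NbEnc) := [
  [
   (1, [([], 2), ([2, 4], 5), ([3], 6), ([0], 7), ([], 8), ([], 9), ([], 10)]),
   (1, [([], 2), ([2, 4], 5), ([3], 6), ([0], 7), ([], 8), ([], 9), ([], 11)]),
   (1, [([], 2), ([2, 4], 5), ([3], 6), ([0], 7), ([], 8), ([1], 10), ([], 11)]),
   (1, [([], 3), ([4], 5), ([3], 6), ([0], 7), ([], 8), ([], 9), ([], 10)]),
   (1, [([], 3), ([4], 5), ([3], 6), ([0], 7), ([], 8), ([], 9), ([], 11)]),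
   (1, [([], 3), ([4], 5), ([3], 6), ([0], 7), ([], 8), ([1], 10), ([], 11)]),
   (2, [([], 3), ([4], 5), ([3], 6), ([0], 7), ([], 8), ([], 9), ([], 10)]),
   (2, [([], 3), ([4], 5), ([3], 6), ([0], 7), ([], 8), ([], 9), ([], 11)]),
   (2, [([], 3), ([4], 5), ([3], 6), ([0], 7), ([], 8), ([1], 10), ([], 11)])],
  [
   (1, [([], 2), ([2], 4), ([], 5), ([], 6), ([5], 9), ([1], 10), ([], 11)]),
   (1, [([], 2), ([2], 4), ([], 5), ([0], 7), ([5], 9), ([1], 10), ([], 11)]),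
   (1, [([], 2), ([2], 4), ([3], 6), ([0], 7), ([5], 9), ([1], 10), ([], 11)]),
   (1, [([], 2), ([2, 4], 5), ([3], 6), ([0], 7), ([5], 9), ([1], 10), ([], 11)]),
   (1, [([], 3), ([], 4), ([], 5), ([], 6), ([5], 9), ([1], 10), ([], 11)]),
   (1, [([], 3), ([], 4), ([], 5), ([0], 7), ([5], 9), ([1], 10), ([], 11)]),
   (1, [([], 3), ([], 4), ([3], 6), ([0], 7), ([5], 9), ([1], 10), ([], 11)]),
   (1, [([], 3), ([4], 5), ([3], 6), ([0], 7), ([5], 9), ([1], 10), ([], 11)]),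
   (2, [([], 3), ([], 4), ([], 5), ([], 6), ([5], 9), ([1], 10), ([], 11)]),
   (2, [([], 3), ([], 4), ([], 5), ([0], 7), ([5], 9), ([1], 10), ([], 11)]),
   (2, [([], 3), ([], 4), ([3], 6), ([0], 7), ([5], 9), ([1], 10), ([], 11)]),
   (2, [([], 3), ([4], 5), ([3], 6), ([0], 7), ([5], 9), ([1], 10), ([], 11)])],
  [
   (1, [([], 2), ([2], 3), ([6], 5), ([], 6), ([], 8), ([], 9), ([], 10)]),
   (1, [([], 2), ([2], 3), ([6], 5), ([], 6), ([], 8), ([], 9), ([], 11)]),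
   (1, [([], 2), ([2], 3), ([6], 5), ([], 6), ([], 8), ([1], 10), ([], 11)]),
   (1, [([], 2), ([2], 3), ([6], 5), ([], 6), ([5], 9), ([1], 10), ([], 11)]),
   (1, [([], 2), ([2], 3), ([6], 5), ([0], 7), ([], 8), ([], 9), ([], 10)]),
   (1, [([], 2), ([2], 3), ([6], 5), ([0], 7), ([], 8), ([], 9), ([], 11)]),
   (1, [([], 2), ([2], 3), ([6], 5), ([0], 7), ([], 8), ([1], 10), ([], 11)]),
   (1, [([], 2), ([2], 3), ([6], 5), ([0], 7), ([5], 9), ([1], 10), ([], 11)]),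
   (1, [([], 2), ([2], 3), ([6, 3], 6), ([0], 7), ([], 8), ([], 9), ([], 10)]),
   (1, [([], 2), ([2], 3), ([6, 3], 6), ([0], 7), ([], 8), ([], 9), ([], 11)]),
   (1, [([], 2), ([2], 3), ([6, 3], 6), ([0], 7), ([], 8), ([1], 10), ([], 11)]),
   (1, [([], 2), ([2], 3), ([6, 3], 6), ([0], 7), ([5], 9), ([1], 10), ([], 11)])],
  [
   (1, [([], 2), ([2], 3), ([6], 5), ([], 6), ([], 7), ([7], 9), ([], 10)]),
   (1, [([], 2), ([2], 3), ([6], 5), ([], 6), ([], 7), ([7], 9), ([], 11)]),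
   (1, [([], 2), ([2], 3), ([6], 5), ([], 6), ([], 7), ([7, 1], 10), ([], 11)]),
   (1, [([], 2), ([2], 4), ([], 5), ([], 6), ([], 7), ([7], 9), ([], 10)]),
   (1, [([], 2), ([2], 4), ([], 5), ([], 6), ([], 7), ([7], 9), ([], 11)]),
   (1, [([], 2), ([2], 4), ([], 5), ([], 6), ([], 7), ([7, 1], 10), ([], 11)]),
   (1, [([], 3), ([], 4), ([], 5), ([], 6), ([], 7), ([7], 9), ([], 10)]),
   (1, [([], 3), ([], 4), ([], 5), ([], 6), ([], 7), ([7], 9), ([], 11)]),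
   (1, [([], 3), ([], 4), ([], 5), ([], 6), ([], 7), ([7, 1], 10), ([], 11)]),
   (2, [([], 3), ([], 4), ([], 5), ([], 6), ([], 7), ([7], 9), ([], 10)]),
   (2, [([], 3), ([], 4), ([], 5), ([], 6), ([], 7), ([7], 9), ([], 11)]),
   (2, [([], 3), ([], 4), ([], 5), ([], 6), ([], 7), ([7, 1], 10), ([], 11)])],
  [
   (1, [([], 2), ([2], 3), ([6], 4), ([8], 6), ([], 7), ([7], 9), ([], 10)]),
   (1, [([], 2), ([2], 3), ([6], 4), ([8], 6), ([], 7), ([7], 9), ([], 11)]),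
   (1, [([], 2), ([2], 3), ([6], 4), ([8], 6), ([], 7), ([7, 1], 10), ([], 11)]),
   (1, [([], 2), ([2], 3), ([6], 4), ([8], 6), ([], 8), ([], 9), ([], 10)]),
   (1, [([], 2), ([2], 3), ([6], 4), ([8], 6), ([], 8), ([], 9), ([], 11)]),
   (1, [([], 2), ([2], 3), ([6], 4), ([8], 6), ([], 8), ([1], 10), ([], 11)]),
   (1, [([], 2), ([2], 3), ([6], 4), ([8], 6), ([5], 9), ([1], 10), ([], 11)]),
   (1, [([], 2), ([2], 3), ([6], 4), ([8, 0], 7), ([], 8), ([], 9), ([], 10)]),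
   (1, [([], 2), ([2], 3), ([6], 4), ([8, 0], 7), ([], 8), ([], 9), ([], 11)]),
   (1, [([], 2), ([2], 3), ([6], 4), ([8, 0], 7), ([], 8), ([1], 10), ([], 11)]),
   (1, [([], 2), ([2], 3), ([6], 4), ([8, 0], 7), ([5], 9), ([1], 10), ([], 11)])],
  [
   (1, [([], 2), ([2], 3), ([6], 4), ([8, 0, 9], 8), ([5], 9), ([1], 10), ([], 11)]),
   (1, [([], 2), ([2], 3), ([6], 5), ([0, 9], 8), ([5], 9), ([1], 10), ([], 11)]),
   (1, [([], 2), ([2], 3), ([6, 3], 6), ([0, 9], 8), ([5], 9), ([1], 10), ([], 11)]),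
   (1, [([], 2), ([2], 4), ([], 5), ([0, 9], 8), ([5], 9), ([1], 10), ([], 11)]),
   (1, [([], 2), ([2], 4), ([3], 6), ([0, 9], 8), ([5], 9), ([1], 10), ([], 11)]),
   (1, [([], 2), ([2, 4], 5), ([3], 6), ([0, 9], 8), ([5], 9), ([1], 10), ([], 11)]),
   (1, [([], 3), ([], 4), ([], 5), ([0, 9], 8), ([5], 9), ([1], 10), ([], 11)]),
   (1, [([], 3), ([], 4), ([3], 6), ([0, 9], 8), ([5], 9), ([1], 10), ([], 11)]),
   (1, [([], 3), ([4], 5), ([3], 6), ([0, 9], 8), ([5], 9), ([1], 10), ([], 11)]),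
   (2, [([], 3), ([], 4), ([], 5), ([0, 9], 8), ([5], 9), ([1], 10), ([], 11)]),
   (2, [([], 3), ([], 4), ([3], 6), ([0, 9], 8), ([5], 9), ([1], 10), ([], 11)]),
   (2, [([], 3), ([4], 5), ([3], 6), ([0, 9], 8), ([5], 9), ([1], 10), ([], 11)])],
  [
   (1, [([], 2), ([2], 3), ([6], 4), ([8], 5), ([10], 7), ([7], 9), ([], 10)]),
   (1, [([], 2), ([2], 3), ([6], 4), ([8], 5), ([10], 7), ([7], 9), ([], 11)]),
   (1, [([], 2), ([2], 3), ([6], 4), ([8], 5), ([10], 7), ([7, 1], 10), ([], 11)]),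
   (1, [([], 2), ([2], 3), ([6], 4), ([8], 5), ([10], 8), ([], 9), ([], 10)]),
   (1, [([], 2), ([2], 3), ([6], 4), ([8], 5), ([10], 8), ([], 9), ([], 11)]),
   (1, [([], 2), ([2], 3), ([6], 4), ([8], 5), ([10], 8), ([1], 10), ([], 11)]),
   (1, [([], 2), ([2], 3), ([6], 4), ([8], 5), ([10, 5], 9), ([1], 10), ([], 11)])],
  [
   (1, [([], 2), ([2], 3), ([6, 3, 11], 7), ([9], 8), ([5], 9), ([1], 10), ([], 11)]),
   (1, [([], 2), ([2], 4), ([3, 11], 7), ([9], 8), ([5], 9), ([1], 10), ([], 11)]),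
   (1, [([], 2), ([2, 4], 5), ([3, 11], 7), ([9], 8), ([5], 9), ([1], 10), ([], 11)]),
   (1, [([], 3), ([], 4), ([3, 11], 7), ([9], 8), ([5], 9), ([1], 10), ([], 11)]),
   (1, [([], 3), ([4], 5), ([3, 11], 7), ([9], 8), ([5], 9), ([1], 10), ([], 11)]),
   (2, [([], 3), ([], 4), ([3, 11], 7), ([9], 8), ([5], 9), ([1], 10), ([], 11)]),
   (2, [([], 3), ([4], 5), ([3, 11], 7), ([9], 8), ([5], 9), ([1], 10), ([], 11)])],
  [
   (1, [([12], 4), ([4], 5), ([3], 6), ([0], 7), ([], 8), ([], 9), ([], 10)]),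
   (1, [([12], 4), ([4], 5), ([3], 6), ([0], 7), ([], 8), ([], 9), ([], 11)]),
   (1, [([12], 4), ([4], 5), ([3], 6), ([0], 7), ([], 8), ([1], 10), ([], 11)]),
   (1, [([12], 4), ([4], 5), ([3], 6), ([0], 7), ([5], 9), ([1], 10), ([], 11)]),
   (1, [([12], 4), ([4], 5), ([3], 6), ([0, 9], 8), ([5], 9), ([1], 10), ([], 11)]),
   (1, [([12], 4), ([4], 5), ([3, 11], 7), ([9], 8), ([5], 9), ([1], 10), ([], 11)]),
   (2, [([12], 4), ([4], 5), ([3], 6), ([0], 7), ([], 8), ([], 9), ([], 10)]),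
   (2, [([12], 4), ([4], 5), ([3], 6), ([0], 7), ([], 8), ([], 9), ([], 11)]),
   (2, [([12], 4), ([4], 5), ([3], 6), ([0], 7), ([], 8), ([1], 10), ([], 11)]),
   (2, [([12], 4), ([4], 5), ([3], 6), ([0], 7), ([5], 9), ([1], 10), ([], 11)]),
   (2, [([12], 4), ([4], 5), ([3], 6), ([0, 9], 8), ([5], 9), ([1], 10), ([], 11)]),
   (2, [([12], 4), ([4], 5), ([3, 11], 7), ([9], 8), ([5], 9), ([1], 10), ([], 11)]),
   (3, [([12], 4), ([4], 5), ([3], 6), ([0], 7), ([], 8), ([], 9), ([], 10)]),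
   (3, [([12], 4), ([4], 5), ([3], 6), ([0], 7), ([], 8), ([], 9), ([], 11)]),
   (3, [([12], 4), ([4], 5), ([3], 6), ([0], 7), ([], 8), ([1], 10), ([], 11)]),
   (3, [([12], 4), ([4], 5), ([3], 6), ([0], 7), ([5], 9), ([1], 10), ([], 11)]),
   (3, [([12], 4), ([4], 5), ([3], 6), ([0, 9], 8), ([5], 9), ([1], 10), ([], 11)]),
   (3, [([12], 4), ([4], 5), ([3, 11], 7), ([9], 8), ([5], 9), ([1], 10), ([], 11)])]]

/-- The part of the search tree below the assignment `j` of the first four variables. -/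
def nbSub (j : ℕ) : Bool :=
  (fun G => cond (nbGo nbRest 32 j G) (nbGo nbRest 32 (Nat.lor j 16) G) false)
    (nbRestrict j nbFirst nbOnes)

theorem nbSub_0 : nbSub 0 = true := by decide +kernel

theorem nbSub_1 : nbSub 1 = true := by decide +kernel

theorem nbSub_2 : nbSub 2 = true := by decide +kernel

theorem nbSub_3 : nbSub 3 = true := by decide +kernel

theorem nbSub_4 : nbSub 4 = true := by decide +kernel

theorem nbSub_5 : nbSub 5 = true := by decide +kernel

theorem nbSub_6 : nbSub 6 = true := by decide +kernel

theorem nbSub_7 : nbSub 7 = true := by decide +kernel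

theorem nbSub_8 : nbSub 8 = true := by decide +kernel

theorem nbSub_9 : nbSub 9 = true := by decide +kernel

theorem nbSub_10 : nbSub 10 = true := by decide +kernel

theorem nbSub_11 : nbSub 11 = true := by decide +kernel

theorem nbSub_12 : nbSub 12 = true := by decide +kernel

theorem nbSub_13 : nbSub 13 = true := by decide +kernel

theorem nbSub_14 : nbSub 14 = true := by decide +kernel

theorem nbSub_15 : nbSub 15 = true := by decide +kernel


/-! ### Soundness of the computation -/

theorem nbKappa_nil (m κ : ℕ) : nbKappa m [] κ = κ := rfl

theorem nbKappa_cons (m v κ : ℕ) (vs : List ℕ) :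
    nbKappa m (v :: vs) κ = nbKappa m vs (κ ^^^ nbE m v) := rfl

theorem nbFs_nil (m κ c : ℕ) : nbFs m [] κ c = [nbX c ^^^ κ] := rfl

theorem nbFs_cons (m κ c c' : ℕ) (vs : List ℕ) (st : List (List ℕ × ℕ)) :
    nbFs m ((vs, c') :: st) κ c =
      (nbX c ^^^ κ) :: nbFs m st (nbKappa m vs (κ ^^^ nbOnes)) c' := rfl

theorem nbRestrict_nil (m G : ℕ) : nbRestrict m [] G = G := rfl

theorem nbRestrict_cons (m G : ℕ) (e : NbEnc) (L : List NbEnc) :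
    nbRestrict m (e :: L) G = nbRestrict m L (G &&& nbBall m e) := rfl

theorem nbGo_nil (p m G : ℕ) : nbGo [] p m G = false := rfl

theorem nbGo_cons (L : List NbEnc) (rest : List (List NbEnc)) (p m G : ℕ) :
    nbGo (L :: rest) p m G = cond (nbLeq (nbRestrict m L G)) true
      (cond (nbGo rest (2 * p) m (nbRestrict m L G))
        (nbGo rest (2 * p) (m ||| p) (nbRestrict m L G)) false) := rfl

theorem nbOnes_eq : nbOnes = 2 ^ 1024 - 1 := by decide +kernel

theorem nbOnes_testBit {w : ℕ} (hw : w < 1024) : nbOnes.testBit w = true := by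
  rw [nbOnes_eq, Nat.testBit_two_pow_sub_one]; simpa using hw

theorem nbE_testBit (m v : ℕ) {w : ℕ} (hw : w < 1024) :
    (nbE m v).testBit w = m.testBit v := by
  have h : nbE m v = nbOnes * ((m >>> v) &&& 1) := rfl
  rw [h, Nat.and_one_is_mod]
  have h2 : m.testBit v = decide ((m >>> v) % 2 = 1) := by
    rw [← Nat.testBit_zero, Nat.testBit_shiftRight, Nat.add_zero]
  rw [h2]
  rcases Nat.mod_two_eq_zero_or_one (m >>> v) with h | h <;> rw [h]
  · simp
  · rw [Nat.mul_one, nbOnes_testBit hw]; simp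

theorem nbX_testBit_aux : ∀ c < 10, ∀ a < 32, ∀ b < 32,
    (nbX (c + 2)).testBit (32 * a + b) = (32 * a + b).testBit c := by
  decide +kernel

theorem nbX_testBit (c : ℕ) (hc : c < 10) (w : ℕ) (hw : w < 1024) :
    (nbX (c + 2)).testBit w = w.testBit c := by
  have h := nbX_testBit_aux c hc (w / 32) (by omega) (w % 32) (by omega)
  rwa [Nat.div_add_mod] at h

theorem nbMaj_testBit (a b c w : ℕ) : (nbMaj a b c).testBit w =
    ((a.testBit w && b.testBit w) || ((a.testBit w ^^ b.testBit w) && c.testBit w)) := by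
  have h : nbMaj a b c = (a &&& b) ||| ((a ^^^ b) &&& c) := rfl
  simp [h]

theorem nbPar_testBit (a b c w : ℕ) : (nbPar a b c).testBit w =
    (a.testBit w ^^ b.testBit w ^^ c.testBit w) := by
  have h : nbPar a b c = (a ^^^ b) ^^^ c := rfl
  simp [h]

theorem nbComb3_testBit (s r p w : ℕ) : (nbComb3 s r p).testBit w =
    ((r.testBit w ^^ p.testBit w) && (r.testBit w || s.testBit w)) := by
  have h : nbComb3 s r p = (r ^^^ p) &&& (r ||| s) := rfl
  simp [h]

theorem nbComb2_testBit (s c p q w : ℕ) : (nbComb2 s c p q).testBit w =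
    (((q.testBit w ^^ (p.testBit w && c.testBit w)) ^^ (p.testBit w ^^ c.testBit w)) &&
      ((q.testBit w ^^ (p.testBit w && c.testBit w)) || s.testBit w)) := by
  have h : nbComb2 s c p q = nbComb3 s (q ^^^ (p &&& c)) (p ^^^ c) := rfl
  simp [h, nbComb3_testBit]

theorem nbComb1_eq (s c1 c2 c3 h : ℕ) : nbComb1 s c1 c2 c3 h =
    nbComb2 (s ^^^ h) (s &&& h) (nbPar c1 c2 c3) (nbMaj c1 c2 c3) := rfl

theorem nbGood8_key : ∀ a b c d e f g h : Bool,
    decide (3 ≤ [a, b, c, d, e, f, g, h].count true ∧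
      3 ≤ [a, b, c, d, e, f, g, h].count false) =
    (let s1 := (a ^^ b ^^ c)
     let c1 := ((a && b) || ((a ^^ b) && c))
     let s2 := (d ^^ e ^^ f)
     let c2 := ((d && e) || ((d ^^ e) && f))
     let s := (s1 ^^ s2 ^^ g)
     let c3 := ((s1 && s2) || ((s1 ^^ s2) && g))
     let p := (c1 ^^ c2 ^^ c3)
     let q := ((c1 && c2) || ((c1 ^^ c2) && c3))
     let r := (q ^^ (p && (s && h)))
     ((r ^^ (p ^^ (s && h))) && (r || (s ^^ h)))) := by
  decide +kernel

theorem nbGood8_testBit' (a b c d e f g h w : ℕ) :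
    (nbGood8 [a, b, c, d, e, f, g, h]).testBit w =
      decide (3 ≤ ([a, b, c, d, e, f, g, h].map (fun a => a.testBit w)).count true ∧
        3 ≤ ([a, b, c, d, e, f, g, h].map (fun a => a.testBit w)).count false) := by
  simp only [List.map_cons, List.map_nil, nbGood8_key]
  have h1 : nbGood8 [a, b, c, d, e, f, g, h] =
      nbComb0 (nbPar a b c) (nbMaj a b c) (nbPar d e f) (nbMaj d e f) g h := by
    delta nbGood8
    exact rfl
  rw [h1]
  simp only [nbComb0, nbComb1_eq, nbComb2_testBit, nbPar_testBit, nbMaj_testBit,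
    Nat.testBit_xor, Nat.testBit_and]

theorem nbGood8_testBit (l : List ℕ) (hl : l.length = 8) (w : ℕ) :
    (nbGood8 l).testBit w =
      decide (3 ≤ (l.map (fun a => a.testBit w)).count true ∧
        3 ≤ (l.map (fun a => a.testBit w)).count false) := by
  match l, hl with
  | [a, b, c, d, e, f, g, h], _ => exact nbGood8_testBit' a b c d e f g h w

/-- The row used to normalise the signs of columns `b` and `b + 1`. -/
def nbGauge (b : ℕ) : ℕ := [0, 1, 1, 2, 3, 4, 5, 5, 6, 7, 7].getD b 0

/-- The row and the column of the `v`-th variable. -/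
def nbPos (v : ℕ) : ℕ × ℕ :=
  [(4, 6), (6, 9), (2, 2), (3, 5), (2, 4), (5, 8), (3, 3), (6, 7), (4, 4), (4, 7), (5, 5), (3, 6),
    (1, 3)].getD v (0, 0)

def nbSegOK (k i : ℕ) : ℕ → ℕ → List ℕ → Bool
  | 0, _, vs => vs.isEmpty
  | d + 1, c, vs =>
    if nbGauge c = i then nbSegOK k i d (c + 1) vs
    else match vs with
      | [] => false
      | v :: vs => decide (v < k) && decide (nbPos v = (i, c)) && nbSegOK k i d (c + 1) vs

def nbOK (k : ℕ) : List (List ℕ × ℕ) → ℕ → ℕ → Bool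
  | [], _, _ => true
  | (vs, c') :: st, i, c =>
    decide (c < c') && decide (c' ≤ 11) && nbSegOK k i (c' - c) c vs && nbOK k st (i + 1) c'

def nbEncOK (k : ℕ) (e : NbEnc) : Bool :=
  decide (1 ≤ e.1) && decide (e.1 ≤ 11) && decide (e.2.length = 7) && nbOK k e.2 1 e.1

def nbLevOK : List (List NbEnc) → ℕ → Bool
  | [], _ => true
  | L :: rest, k => L.all (nbEncOK k) && nbLevOK rest (k + 1)

theorem nbFirst_ok : nbFirst.all (nbEncOK 4) = true := by decide +kernel

theorem nbRest_ok : nbLevOK nbRest 5 = true := by decide +kernel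

/-- The bits along a circuit: constant exactly when the circuit is positive. -/
def nbFl (u : ℕ → ℕ → Bool) (z : ℕ → Bool) : List ℕ → ℕ → Bool → ℕ → List Bool
  | [], _, κ, c => [z c ^^ κ]
  | c' :: cs, i, κ, c =>
    (z c ^^ κ) :: nbFl u z cs (i + 1) ((κ ^^ true) ^^ (u i c ^^ u i c')) c'

theorem nbFl_length (u : ℕ → ℕ → Bool) (z : ℕ → Bool) (cs : List ℕ) (i : ℕ) (κ : Bool) (c : ℕ) :
    (nbFl u z cs i κ c).length = cs.length + 1 := by
  induction cs generalizing i κ c with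
  | nil => rfl
  | cons c' cs ih => simp [nbFl, ih]

def nbVal (u : ℕ → ℕ → Bool) (v : ℕ) : Bool :=
  u (nbPos v).1 (nbPos v).2 ^^ u (nbPos v).1 ((nbPos v).2 + 1)

section sound

variable {u : ℕ → ℕ → Bool} {z : ℕ → Bool}

theorem nbSeg_sound (hu : ∀ b, u (nbGauge b) b = u (nbGauge b) (b + 1)) {k m w : ℕ}
    (hw : w < 1024) (hm : ∀ v < k, m.testBit v = nbVal u v) (i d c : ℕ) (vs : List ℕ) (κ : ℕ)
    (h : nbSegOK k i d c vs = true) :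
    (nbKappa m vs κ).testBit w = (κ.testBit w ^^ (u i c ^^ u i (c + d))) := by
  induction d generalizing c vs κ with
  | zero =>
    cases vs with
    | nil => simp [nbKappa_nil]
    | cons v vs => simp [nbSegOK] at h
  | succ d ih =>
    unfold nbSegOK at h
    split_ifs at h with hg
    · rw [ih _ _ _ h, show c + 1 + d = c + (d + 1) by omega, ← hg, ← hu c]
    · cases vs with
      | nil => simp at h
      | cons v vs =>
        simp only [Bool.and_eq_true, decide_eq_true_eq] at h
        obtain ⟨⟨hv, hp⟩, h⟩ := h
        rw [nbKappa_cons, ih _ _ _ h, Nat.testBit_xor, nbE_testBit _ _ hw, hm v hv, nbVal, hp,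
          show c + 1 + d = c + (d + 1) by omega]
        cases κ.testBit w <;> cases u i c <;> cases u i (c + 1) <;> cases u i (c + (d + 1)) <;> rfl

theorem nbFs_sound (hu : ∀ b, u (nbGauge b) b = u (nbGauge b) (b + 1)) {k m w : ℕ}
    (hw : w < 1024) (hm : ∀ v < k, m.testBit v = nbVal u v)
    (hz : ∀ c, 1 ≤ c → c ≤ 11 → (nbX c).testBit w = z c)
    (st : List (List ℕ × ℕ)) (i κ c : ℕ) (hc : 1 ≤ c) (hc' : c ≤ 11)
    (h : nbOK k st i c = true) :
    (nbFs m st κ c).map (fun a => a.testBit w) =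
      nbFl u z (st.map Prod.snd) i (κ.testBit w) c := by
  induction st generalizing i κ c with
  | nil => simp [nbFs_nil, nbFl, hz c hc hc']
  | cons s st ih =>
    obtain ⟨vs, c'⟩ := s
    simp only [nbOK, Bool.and_eq_true, decide_eq_true_eq] at h
    obtain ⟨⟨⟨h1, h2⟩, h3⟩, h4⟩ := h
    rw [nbFs_cons, List.map_cons, ih _ _ _ (by omega) h2 h4, nbSeg_sound hu hw hm _ _ _ _ _ h3,
      List.map_cons, nbFl, Nat.testBit_xor, Nat.testBit_xor, hz c hc hc', nbOnes_testBit hw,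
      show c + (c' - c) = c' by omega]

theorem nbFs_length (m : ℕ) (st : List (List ℕ × ℕ)) (κ c : ℕ) :
    (nbFs m st κ c).length = st.length + 1 := by
  induction st generalizing κ c with
  | nil => rfl
  | cons s st ih => obtain ⟨vs, c'⟩ := s; simp [nbFs_cons, ih]

/-- Strictly increasing columns. -/
def nbInc : ℕ → List ℕ → Prop
  | _, [] => True
  | c, c' :: cs => c < c' ∧ c' ≤ 11 ∧ nbInc c' cs

theorem nbOK_inc {k : ℕ} (st : List (List ℕ × ℕ)) (i c : ℕ) (h : nbOK k st i c = true) :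
    nbInc c (st.map Prod.snd) := by
  induction st generalizing i c with
  | nil => trivial
  | cons s st ih =>
    obtain ⟨vs, c'⟩ := s
    simp only [nbOK, Bool.and_eq_true, decide_eq_true_eq] at h
    exact ⟨h.1.1.1, h.1.1.2, ih _ _ h.2⟩

/-- All circuits are at distance at least three from being positive. -/
def nbFar (u : ℕ → ℕ → Bool) (z : ℕ → Bool) : Prop :=
  ∀ c cs, 1 ≤ c → c ≤ 11 → cs.length = 7 → nbInc c cs → ∀ t : Bool,
    3 ≤ (nbFl u z cs 1 false c).count t

theorem nbBall_sound (hu : ∀ b, u (nbGauge b) b = u (nbGauge b) (b + 1)) {k m w : ℕ}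
    (hw : w < 1024) (hm : ∀ v < k, m.testBit v = nbVal u v)
    (hz : ∀ c, 1 ≤ c → c ≤ 11 → (nbX c).testBit w = z c) (hf : nbFar u z)
    (e : NbEnc) (he : nbEncOK k e = true) : (nbBall m e).testBit w = true := by
  simp only [nbEncOK, Bool.and_eq_true, decide_eq_true_eq] at he
  obtain ⟨⟨⟨h1, h2⟩, h3⟩, h4⟩ := he
  rw [nbBall, nbGood8_testBit _ (by rw [nbFs_length, h3]), nbFs_sound hu hw hm hz _ _ _ _ h1 h2 h4]
  have := hf e.1 (e.2.map Prod.snd) h1 h2 (by simpa using h3) (nbOK_inc _ _ _ h4)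
  simpa using ⟨this true, this false⟩

theorem nbRestrict_sound (hu : ∀ b, u (nbGauge b) b = u (nbGauge b) (b + 1)) {k m w : ℕ}
    (hw : w < 1024) (hm : ∀ v < k, m.testBit v = nbVal u v)
    (hz : ∀ c, 1 ≤ c → c ≤ 11 → (nbX c).testBit w = z c) (hf : nbFar u z)
    (L : List NbEnc) (hL : L.all (nbEncOK k) = true) (G : ℕ) (hG : G.testBit w = true) :
    (nbRestrict m L G).testBit w = true := by
  induction L generalizing G with
  | nil => exact hG
  | cons e L ih =>
    simp only [List.all_cons, Bool.and_eq_true] at hL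
    rw [nbRestrict_cons]
    apply ih hL.2
    rw [Nat.testBit_and, hG, nbBall_sound hu hw hm hz hf e hL.1]
    rfl

end sound

theorem nbClr_bit (G : ℕ) : ∃ k, ∀ x, x ≠ k → G.testBit x = true → (nbClr G).testBit x = true := by
  have h : nbClr G = G &&& (G - 1) := rfl
  rw [h]
  clear h
  induction G using Nat.strong_induction_on with
  | _ G ih =>
    rcases Nat.even_or_odd' G with ⟨n, rfl | rfl⟩
    · rcases Nat.eq_zero_or_pos n with rfl | hn
      · exact ⟨0, by simp⟩
      · obtain ⟨k, hk⟩ := ih n (by omega)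
        refine ⟨k + 1, fun x hx h => ?_⟩
        cases x with
        | zero => simp at h
        | succ x =>
          have := hk x (by omega)
          rw [Nat.testBit_and] at this ⊢
          rw [Nat.testBit_succ, Nat.testBit_succ, show (2 * n - 1) / 2 = n - 1 by omega,
            show 2 * n / 2 = n by omega]
          rw [Nat.testBit_succ, show 2 * n / 2 = n by omega] at h
          exact this h
    · refine ⟨0, fun x hx h => ?_⟩
      cases x with
      | zero => omega
      | succ x =>
        rw [Nat.testBit_and, h]
        rw [Nat.testBit_succ, show (2 * n + 1) / 2 = n by omega] at h
        rw [Nat.testBit_succ, show (2 * n + 1 - 1) / 2 = n by omega, h]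
        rfl

/-- `f` removes at most `n` bits. -/
def nbDrops (f : ℕ → ℕ) (n : ℕ) : Prop :=
  ∀ (G : ℕ) (W : Finset ℕ), (∀ w ∈ W, G.testBit w = true) →
    ∃ W' : Finset ℕ, (∀ w ∈ W', (f G).testBit w = true) ∧ W.card ≤ W'.card + n

theorem nbDrops_clr : nbDrops nbClr 1 := by
  intro G W h
  obtain ⟨k, hk⟩ := nbClr_bit G
  refine ⟨W.erase k, fun w hw => ?_, ?_⟩
  · rw [Finset.mem_erase] at hw
    exact hk w hw.1 (h w hw.2)
  · have := Finset.pred_card_le_card_erase (s := W) (a := k)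
    omega

theorem nbDrops_comp {f g : ℕ → ℕ} {a b : ℕ} (hf : nbDrops f a) (hg : nbDrops g b) :
    nbDrops (fun G => g (f G)) (a + b) := by
  intro G W h
  obtain ⟨W', h1, h2⟩ := hf G W h
  obtain ⟨W'', h3, h4⟩ := hg _ W' h1
  exact ⟨W'', h3, by omega⟩

theorem nbLeq_sound (G : ℕ) (W : Finset ℕ) (h : ∀ w ∈ W, G.testBit w = true)
    (hG : nbLeq G = true) : W.card ≤ 56 := by
  have d2 : nbDrops nbClr2 2 := nbDrops_comp nbDrops_clr nbDrops_clr
  have d4 : nbDrops nbClr4 4 := nbDrops_comp d2 d2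
  have d8 : nbDrops nbClr8 8 := nbDrops_comp d4 d4
  have d16 := nbDrops_comp d8 d8
  have d32 := nbDrops_comp d16 d16
  have d56 := nbDrops_comp (nbDrops_comp d32 d16) d8
  obtain ⟨W', h1, h2⟩ := d56 G W h
  have h0 := Nat.eq_of_beq_eq_true hG
  have : W' = ∅ := by
    apply Finset.eq_empty_of_forall_notMem
    intro w hw
    have := h1 w hw
    simp only [h0] at this
    simp at this
  rw [this] at h2
  simpa using h2

theorem nbGo_sound {u : ℕ → ℕ → Bool} (hu : ∀ b, u (nbGauge b) b = u (nbGauge b) (b + 1))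
    (W : Finset ℕ) (hW : ∀ w ∈ W, w < 1024 ∧ ∃ z : ℕ → Bool,
      (∀ c, 1 ≤ c → c ≤ 11 → (nbX c).testBit w = z c) ∧ nbFar u z)
    (lv : List (List NbEnc)) (k m G : ℕ) (hlv : nbLevOK lv k = true)
    (hm : ∀ v, m.testBit v = (decide (v < k) && nbVal u v))
    (hG : ∀ w ∈ W, G.testBit w = true) (hgo : nbGo lv (2 ^ k) m G = true) :
    W.card ≤ 56 := by
  induction lv generalizing k m G with
  | nil => simp [nbGo_nil] at hgo
  | cons L rest ih =>
    simp only [nbLevOK, Bool.and_eq_true] at hlv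
    have hG' : ∀ w ∈ W, (nbRestrict m L G).testBit w = true := by
      intro w hw
      obtain ⟨hw1, z, hz, hf⟩ := hW w hw
      exact nbRestrict_sound hu hw1 (fun v hv => by simp [hm, hv]) hz hf L hlv.1 G (hG w hw)
    rw [nbGo_cons] at hgo
    cases hl : nbLeq (nbRestrict m L G) with
    | true => exact nbLeq_sound _ W hG' hl
    | false =>
      rw [hl, cond_false, Bool.cond_false_right, Bool.and_eq_true, ← pow_succ'] at hgo
      cases hv : nbVal u k with
      | false =>
        refine ih (k + 1) m _ hlv.2 (fun v => ?_) hG' hgo.1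
        rw [hm]
        rcases lt_trichotomy v k with h | h | h
        · simp [h, Nat.lt_succ_of_lt h]
        · simp [h, hv]
        · simp [show ¬ v < k by omega, show ¬ v < k + 1 by omega]
      | true =>
        refine ih (k + 1) _ _ hlv.2 (fun v => ?_) hG' hgo.2
        rw [Nat.testBit_or, hm, Nat.testBit_two_pow]
        rcases lt_trichotomy v k with h | h | h
        · simp [h, Nat.lt_succ_of_lt h, show ¬ k = v by omega]
        · simp [h, hv]
        · simp [show ¬ v < k by omega, show ¬ v < k + 1 by omega, show ¬ k = v by omega]

theorem nbSub_all (j : ℕ) (hj : j < 16) : nbSub j = true := by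
  interval_cases j
  exacts [nbSub_0, nbSub_1, nbSub_2, nbSub_3, nbSub_4, nbSub_5, nbSub_6, nbSub_7, nbSub_8, nbSub_9, nbSub_10, nbSub_11, nbSub_12, nbSub_13, nbSub_14, nbSub_15]

theorem nb_card_le {u : ℕ → ℕ → Bool} (hu : ∀ b, u (nbGauge b) b = u (nbGauge b) (b + 1))
    (W : Finset ℕ) (hW : ∀ w ∈ W, w < 1024 ∧ ∃ z : ℕ → Bool,
      (∀ c, 1 ≤ c → c ≤ 11 → (nbX c).testBit w = z c) ∧ nbFar u z) : W.card ≤ 56 := by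
  obtain ⟨j, hj, hjm⟩ : ∃ j < 16, ∀ v, j.testBit v = (decide (v < 4) && nbVal u v) := by
    refine ⟨Nat.ofBits (fun i : Fin 4 => nbVal u i), Nat.ofBits_lt_two_pow _, fun v => ?_⟩
    by_cases hv : v < 4
    · rw [Nat.testBit_ofBits_lt _ _ hv]; simp [hv]
    · rw [Nat.testBit_ofBits_ge _ _ (by omega)]; simp [hv]
  have hs : cond (nbGo nbRest (2 ^ 5) j (nbRestrict j nbFirst nbOnes))
      (nbGo nbRest (2 ^ 5) (j ||| 2 ^ 4) (nbRestrict j nbFirst nbOnes)) false = true :=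
    nbSub_all j hj
  rw [Bool.cond_false_right, Bool.and_eq_true] at hs
  have hG' : ∀ w ∈ W, (nbRestrict j nbFirst nbOnes).testBit w = true := by
    intro w hw
    obtain ⟨hw1, z, hz, hf⟩ := hW w hw
    exact nbRestrict_sound hu hw1 (k := 4) (fun v hv => by simp [hjm, hv]) hz hf _ nbFirst_ok _
      (nbOnes_testBit hw1)
  cases hv : nbVal u 4 with
  | false =>
    refine nbGo_sound hu W hW nbRest 5 j _ nbRest_ok (fun v => ?_) hG' hs.1
    rw [hjm]
    rcases lt_trichotomy v 4 with h | h | h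
    · simp [h, Nat.lt_succ_of_lt h]
    · simp [h, hv]
    · simp [show ¬ v < 4 by omega, show ¬ v < 5 by omega]
  | true =>
    refine nbGo_sound hu W hW nbRest 5 _ _ nbRest_ok (fun v => ?_) hG' hs.2
    rw [Nat.testBit_or, hjm, Nat.testBit_two_pow]
    rcases lt_trichotomy v 4 with h | h | h
    · simp [h, Nat.lt_succ_of_lt h, show ¬ 4 = v by omega]
    · simp [h, hv]
    · simp [show ¬ v < 4 by omega, show ¬ v < 5 by omega, show ¬ 4 = v by omega]


/-! ### From sign matrices to words -/

theorem nb_rowChange {B : ℕ → ℕ → ℤ} {i t c c' : ℕ} (htc : t ≤ c) (hcc : c < c') (hc' : c' ≤ 11)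
    (hne : B i c ≠ B i c') : ∃ t', rowChange B 11 i t = some t' ∧ t' ≤ c' := by
  have hex : ∃ y, y ≤ c' ∧ t < y ∧ B i y ≠ B i t := by
    by_cases h : B i c = B i t
    · exact ⟨c', le_rfl, by omega, fun h' => hne (h.trans h'.symm)⟩
    · exact ⟨c, hcc.le, lt_of_le_of_ne htc (fun h' => h (by rw [h'])), h⟩
  obtain ⟨y, hy1, hy2, hy3⟩ := hex
  cases hr : rowChange B 11 i t with
  | none =>
    rw [rowChange, List.find?_eq_none] at hr
    exact absurd (hr y (by rw [List.mem_range]; omega)) (by simp [hy2, hy3])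
  | some t' =>
    refine ⟨t', rfl, ?_⟩
    rw [rowChange, List.find?_range_eq_some] at hr
    by_contra hlt
    have := hr.2.2 y (by omega)
    simp [hy2, hy3] at this

/-- Alternation along a sequence of columns, starting from row `i`. -/
def nbAlt (B : ℕ → ℕ → ℤ) : List ℕ → ℕ → ℕ → Prop
  | [], _, _ => True
  | c' :: cs, i, c => c < c' ∧ c' ≤ 11 ∧ B i c ≠ B i c' ∧ nbAlt B cs (i + 1) c'

theorem nbAlt_entry {B : ℕ → ℕ → ℤ} (cs : List ℕ) (i c t : ℕ) (h : nbAlt B cs (i + 1) c)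
    (ht : ttEntry B 11 (i + 1) = some t) (htc : t ≤ c) :
    (ttEntry B 11 (i + 1 + cs.length)).isSome := by
  induction cs generalizing i c t with
  | nil => simp [ht]
  | cons c' cs ih =>
    obtain ⟨h1, h2, h3, h4⟩ := h
    obtain ⟨t', ht', hle⟩ := nb_rowChange htc h1 h2 h3
    have := ih (i + 1) c' t' h4 (by rw [ttEntry, ht]; exact ht') hle
    rw [List.length_cons, show i + 1 + (cs.length + 1) = i + 1 + 1 + cs.length by omega]
    exact this

/-- The columns of a circuit whose bit equals `t`. -/
def nbS (u : ℕ → ℕ → Bool) (z : ℕ → Bool) (t : Bool) : List ℕ → ℕ → Bool → ℕ → Finset ℕ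
  | [], _, κ, c => if (z c ^^ κ) = t then {c} else ∅
  | c' :: cs, i, κ, c =>
    if (z c ^^ κ) = t then
      insert c (nbS u z t cs (i + 1) ((κ ^^ true) ^^ (u i c ^^ u i c')) c')
    else nbS u z t cs (i + 1) ((κ ^^ true) ^^ (u i c ^^ u i c')) c'

theorem nbS_card (u : ℕ → ℕ → Bool) (z : ℕ → Bool) (t : Bool) (cs : List ℕ) (i : ℕ) (κ : Bool)
    (c : ℕ) : (nbS u z t cs i κ c).card ≤ (nbFl u z cs i κ c).count t := by
  induction cs generalizing i κ c with
  | nil =>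
    rw [nbS, nbFl]
    split_ifs with h
    · simp [h]
    · simp
  | cons c' cs ih =>
    rw [nbS, nbFl, List.count_cons]
    have := ih (i + 1) ((κ ^^ true) ^^ (u i c ^^ u i c')) c'
    split_ifs with h h' h'
    · exact (Finset.card_insert_le _ _).trans (by omega)
    · simp [h] at h'
    · simp [h] at h'
    · omega

theorem nbS_mem {u : ℕ → ℕ → Bool} {z : ℕ → Bool} {t : Bool} (cs : List ℕ) (i : ℕ) (κ : Bool)
    (c : ℕ) (hc : c ≤ 11) (hinc : nbInc c cs) : ∀ x ∈ nbS u z t cs i κ c, c ≤ x ∧ x ≤ 11 := by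
  induction cs generalizing i κ c with
  | nil =>
    intro x hx
    rw [nbS] at hx
    split_ifs at hx
    · rw [Finset.mem_singleton] at hx; omega
    · simp at hx
  | cons c' cs ih =>
    intro x hx
    obtain ⟨h1, h2, h3⟩ := hinc
    have := ih (i + 1) ((κ ^^ true) ^^ (u i c ^^ u i c')) c' h2 h3 x
    rw [nbS] at hx
    split_ifs at hx
    · rw [Finset.mem_insert] at hx
      rcases hx with rfl | hx
      · omega
      · have := this hx; omega
    · have := this hx; omega

theorem nbS_head {u : ℕ → ℕ → Bool} {z : ℕ → Bool} {t : Bool} (cs : List ℕ) (i : ℕ) (κ : Bool)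
    (c : ℕ) (hinc : nbInc c cs) : c ∈ nbS u z t cs i κ c ↔ (z c ^^ κ) = t := by
  cases cs with
  | nil => rw [nbS]; split_ifs with h <;> simp [h]
  | cons c' cs =>
    rw [nbS]
    split_ifs with h
    · simp [h]
    · simp only [h, iff_false]
      intro hx
      have := nbS_mem cs _ _ c' hinc.2.1 hinc.2.2 c hx
      have := hinc.1
      omega

theorem nb_bool_alt : ∀ a1 a2 a3 a4 κ t : Bool,
    (a1 ^^ a3 ^^ decide ((a3 ^^ κ) = t)) ≠
      (a2 ^^ a4 ^^ decide ((a4 ^^ ((κ ^^ true) ^^ (a1 ^^ a2))) = t)) := by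
  decide

theorem nbS_alt {B : ℕ → ℕ → ℤ} {u : ℕ → ℕ → Bool} {z : ℕ → Bool} {t : Bool} {S : Finset ℕ}
    (hB : ∀ i j j', 1 ≤ i → i ≤ 7 → 1 ≤ j → j ≤ 11 → 1 ≤ j' → j' ≤ 11 →
      (B i j ≠ B i j' ↔
        (u i j ^^ z j ^^ decide (j ∈ S)) ≠ (u i j' ^^ z j' ^^ decide (j' ∈ S))))
    (cs : List ℕ) (i : ℕ) (κ : Bool) (c : ℕ) (hi : 1 ≤ i) (hi' : i + cs.length ≤ 8)
    (hc : 1 ≤ c) (hc' : c ≤ 11) (hinc : nbInc c cs)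
    (hS : ∀ x, c ≤ x → (x ∈ S ↔ x ∈ nbS u z t cs i κ c)) : nbAlt B cs i c := by
  induction cs generalizing i κ c with
  | nil => trivial
  | cons c' cs ih =>
    have hh := nbS_head (u := u) (z := z) (t := t) (c' :: cs) i κ c hinc
    obtain ⟨h1, h2, h3⟩ := hinc
    rw [List.length_cons] at hi'
    have hS' : ∀ x, c' ≤ x →
        (x ∈ S ↔ x ∈ nbS u z t cs (i + 1) ((κ ^^ true) ^^ (u i c ^^ u i c')) c') := by
      intro x hx
      rw [hS x (by omega), nbS]
      split_ifs
      · rw [Finset.mem_insert]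
        exact ⟨fun h => h.resolve_left (by omega), Or.inr⟩
      · rfl
    refine ⟨h1, h2, ?_, ih _ _ _ (by omega) (by omega) (by omega) h2 h3 hS'⟩
    rw [hB i c c' hi (by omega) hc hc' (by omega) h2]
    have e1 := (hS c le_rfl).trans hh
    have e2 := (hS' c' le_rfl).trans (nbS_head cs _ _ c' h3)
    simp only [e1, e2]
    exact nb_bool_alt _ _ _ _ _ _

theorem nbFar_of_neighborly {B : ℕ → ℕ → ℤ} {u : ℕ → ℕ → Bool} {z : ℕ → Bool}
    (hB : ∀ S i j j', 1 ≤ i → i ≤ 7 → 1 ≤ j → j ≤ 11 → 1 ≤ j' → j' ≤ 11 →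
      (reorient B S i j ≠ reorient B S i j' ↔
        (u i j ^^ z j ^^ decide (j ∈ S)) ≠ (u i j' ^^ z j' ^^ decide (j' ∈ S))))
    (hN : IsNeighborly B 7 11 2) : nbFar u z := by
  intro c cs hc hc' hl hinc t
  by_contra hlt
  have hcard := nbS_card u z t cs 1 false c
  refine hN (nbS u z t cs 1 false c) (fun x hx => ?_) (by omega) ?_
  · have := nbS_mem cs 1 false c hc' hinc x hx
    rw [Finset.mem_Icc]; omega
  · have halt := nbS_alt (t := t) (hB (nbS u z t cs 1 false c)) cs 1 false c le_rfl (by omega) hc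
      hc' hinc (fun _ _ => Iff.rfl)
    have := nbAlt_entry cs 0 c 1 halt rfl hc
    rw [hl] at this
    exact this

theorem nb_rowChange_congr {B B' : ℕ → ℕ → ℤ} {i c : ℕ} (hc : 1 ≤ c) (hc' : c ≤ 11)
    (h : ∀ j j', 1 ≤ j → j ≤ 11 → 1 ≤ j' → j' ≤ 11 → (B i j ≠ B i j' ↔ B' i j ≠ B' i j')) :
    rowChange B 11 i c = rowChange B' 11 i c := by
  rw [rowChange, rowChange]
  apply List.find?_congr
  intro x hx
  rw [List.mem_range] at hx
  apply decide_eq_decide.mpr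
  constructor
  · rintro ⟨h1, h2⟩
    exact ⟨h1, (h x c (by omega) (by omega) hc hc').mp h2⟩
  · rintro ⟨h1, h2⟩
    exact ⟨h1, (h x c (by omega) (by omega) hc hc').mpr h2⟩

theorem nb_rowChange_bound {B : ℕ → ℕ → ℤ} {i c d : ℕ} (h : rowChange B 11 i c = some d) :
    1 ≤ d ∧ d ≤ 11 := by
  have h1 := List.mem_of_find?_eq_some h
  have h2 := List.find?_some h
  rw [List.mem_range] at h1
  simp only [decide_eq_true_eq] at h2
  omega

theorem nb_ttEntry_bound {B : ℕ → ℕ → ℤ} {i d : ℕ} (h : ttEntry B 11 i = some d) :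
    1 ≤ d ∧ d ≤ 11 := by
  match i with
  | 0 => simp [ttEntry] at h
  | 1 => simp [ttEntry] at h; omega
  | i + 2 =>
    rw [ttEntry, Option.bind_eq_some_iff] at h
    obtain ⟨a, _, h⟩ := h
    exact nb_rowChange_bound h

theorem nb_ttEntry_congr {B B' : ℕ → ℕ → ℤ}
    (h : ∀ i j j', 1 ≤ i → i ≤ 7 → 1 ≤ j → j ≤ 11 → 1 ≤ j' → j' ≤ 11 →
      (B i j ≠ B i j' ↔ B' i j ≠ B' i j')) (i : ℕ) (hi : i ≤ 7) :
    ttEntry B 11 (i + 1) = ttEntry B' 11 (i + 1) := by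
  induction i with
  | zero => rfl
  | succ i ih =>
    rw [ttEntry, ttEntry, ← ih (by omega)]
    cases hd : ttEntry B 11 (i + 1) with
    | none => rfl
    | some d =>
      obtain ⟨h1, h2⟩ := nb_ttEntry_bound hd
      exact nb_rowChange_congr h1 h2 fun j j' => h (i + 1) j j' (by omega) hi

theorem nb_ttEntry_none {B : ℕ → ℕ → ℤ} {i : ℕ} (h : ttEntry B 11 (i + 1) = none) (d : ℕ) :
    ttEntry B 11 (i + 1 + d) = none := by
  induction d with
  | zero => exact h
  | succ d ih =>
    rw [show i + 1 + (d + 1) = (i + d) + 2 by omega, ttEntry,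
      show i + d + 1 = i + 1 + d by omega, ih]
    rfl

theorem nb_follows {B : ℕ → ℕ → ℤ} {D : Finset ℕ} (hc : D.card ≤ 6) (h : ttFollows B 11 D)
    (c : ℕ) : c ∈ D ↔ ∃ i, 2 ≤ i ∧ i ≤ 8 ∧ ttEntry B 11 i = some c := by
  rw [h.2 c]
  constructor
  · rintro ⟨i, h1, h2, h3⟩
    exact ⟨i, h1, by omega, h3⟩
  · rintro ⟨i, h1, h2, h3⟩
    refine ⟨i, h1, ?_, h3⟩
    by_contra hlt
    have := nb_ttEntry_none (i := D.card + 1) h.1 (i - (D.card + 2))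
    rw [show D.card + 1 + 1 + (i - (D.card + 2)) = i by omega, h3] at this
    simp at this

def nbBit (A : ℕ → ℕ → ℤ) (i j : ℕ) : Bool := decide (A i j = -1)

def nbCol (A : ℕ → ℕ → ℤ) : ℕ → Bool
  | 0 => false
  | b + 1 => nbCol A b ^^ (nbBit A (nbGauge b) b ^^ nbBit A (nbGauge b) (b + 1))

def nbU (A : ℕ → ℕ → ℤ) (i j : ℕ) : Bool := nbBit A i j ^^ nbCol A j

def nbZ (A : ℕ → ℕ → ℤ) (R : Finset ℕ) (j : ℕ) : Bool :=
  (decide (j ∈ R) ^^ nbCol A j) ^^ (decide (1 ∈ R) ^^ nbCol A 1)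

theorem nbU_gauge (A : ℕ → ℕ → ℤ) (b : ℕ) : nbU A (nbGauge b) b = nbU A (nbGauge b) (b + 1) := by
  rw [nbU, nbU, nbCol]
  cases nbBit A (nbGauge b) b <;> cases nbBit A (nbGauge b) (b + 1) <;> cases nbCol A b <;> rfl

theorem nb_reorient_ne {A : ℕ → ℕ → ℤ} (hA : IsSignMatrix 7 11 A) (R S : Finset ℕ) (i j j' : ℕ)
    (hi : 1 ≤ i) (hi' : i ≤ 7) (hj : 1 ≤ j) (hj' : j ≤ 11) (hk : 1 ≤ j') (hk' : j' ≤ 11) :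
    reorient (reorient A R) S i j ≠ reorient (reorient A R) S i j' ↔
      (nbU A i j ^^ nbZ A R j ^^ decide (j ∈ S)) ≠
        (nbU A i j' ^^ nbZ A R j' ^^ decide (j' ∈ S)) := by
  have key : ∀ j, (A i j = 1 ∨ A i j = -1) → reorient (reorient A R) S i j =
      if (nbBit A i j ^^ decide (j ∈ R) ^^ decide (j ∈ S)) then -1 else 1 := by
    intro j h
    rcases h with h | h <;> by_cases h1 : j ∈ R <;> by_cases h2 : j ∈ S <;>
      simp [reorient, nbBit, h, h1, h2]
  have key2 : ∀ j, (nbU A i j ^^ nbZ A R j ^^ decide (j ∈ S)) =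
      ((nbBit A i j ^^ decide (j ∈ R) ^^ decide (j ∈ S)) ^^ (decide (1 ∈ R) ^^ nbCol A 1)) := by
    intro j
    rw [nbU, nbZ]
    generalize nbBit A i j = a
    generalize nbCol A j = b
    generalize decide (j ∈ R) = c
    generalize decide (j ∈ S) = d
    generalize (decide (1 ∈ R) ^^ nbCol A 1) = e
    revert a b c d e
    decide
  rw [key j (hA i j hi hi' hj hj'), key j' (hA i j' hi hi' hk hk'), key2 j, key2 j']
  generalize (nbBit A i j ^^ decide (j ∈ R) ^^ decide (j ∈ S)) = a
  generalize (nbBit A i j' ^^ decide (j' ∈ R) ^^ decide (j' ∈ S)) = b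
  generalize (decide (1 ∈ R) ^^ nbCol A 1) = c
  revert a b c
  decide

theorem nb_reorient_ne' {A : ℕ → ℕ → ℤ} (hA : IsSignMatrix 7 11 A) (R : Finset ℕ) (i j j' : ℕ)
    (hi : 1 ≤ i) (hi' : i ≤ 7) (hj : 1 ≤ j) (hj' : j ≤ 11) (hk : 1 ≤ j') (hk' : j' ≤ 11) :
    reorient A R i j ≠ reorient A R i j' ↔
      (nbU A i j ^^ nbZ A R j) ≠ (nbU A i j' ^^ nbZ A R j') := by
  have := nb_reorient_ne hA R ∅ i j j' hi hi' hj hj' hk hk'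
  simpa [reorient] using this

/-- The word of a reorientation. -/
def nbWord (A : ℕ → ℕ → ℤ) (R : Finset ℕ) : ℕ := Nat.ofBits fun i : Fin 10 => nbZ A R (i + 2)

theorem nbWord_lt (A : ℕ → ℕ → ℤ) (R : Finset ℕ) : nbWord A R < 1024 := Nat.ofBits_lt_two_pow _

theorem nbWord_testBit (A : ℕ → ℕ → ℤ) (R : Finset ℕ) (c : ℕ) (hc : 1 ≤ c) (hc' : c ≤ 11) :
    (nbX c).testBit (nbWord A R) = nbZ A R c := by
  match c with
  | 0 => omega
  | 1 =>
    have : nbX 1 = 0 := rfl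
    rw [this, nbZ]
    simp
  | c + 2 =>
    rw [nbX_testBit c (by omega) _ (nbWord_lt A R), nbWord, Nat.testBit_ofBits_lt _ _ (by omega)]

theorem nbWord_inj {A : ℕ → ℕ → ℤ} (hA : IsSignMatrix 7 11 A) {R R' D D' : Finset ℕ}
    (hD : D.card ≤ 6) (hD' : D'.card ≤ 6) (h : ttFollows (reorient A R) 11 D)
    (h' : ttFollows (reorient A R') 11 D') (hw : nbWord A R = nbWord A R') : D = D' := by
  have hz : ∀ c, 1 ≤ c → c ≤ 11 → nbZ A R c = nbZ A R' c := fun c h1 h2 => by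
    rw [← nbWord_testBit A R c h1 h2, hw, nbWord_testBit A R' c h1 h2]
  have ht := nb_ttEntry_congr (B := reorient A R) (B' := reorient A R')
    (fun i j j' a b c d e f => by
      rw [nb_reorient_ne' hA R i j j' a b c d e f, nb_reorient_ne' hA R' i j j' a b c d e f,
        hz j c d, hz j' e f])
  ext c
  rw [nb_follows hD h, nb_follows hD' h']
  refine exists_congr fun i => and_congr_right fun h1 => and_congr_right fun h2 => ?_
  have := ht (i - 1) (by omega)
  rw [show i - 1 + 1 = i by omega] at this
  rw [this]


/-- Every 7×11 sign matrix has at most 56 2-neighborly plain travels. -/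
theorem statement_13 (A : ℕ → ℕ → ℤ) (hA : IsSignMatrix 7 11 A) :
    {D : Finset ℕ | IsPlainTravel 7 11 D ∧ IsNeighborlyTravel A 7 11 2 D}.ncard ≤ 56 := by
  classical
  have hfin : {D : Finset ℕ | IsPlainTravel 7 11 D ∧ IsNeighborlyTravel A 7 11 2 D}.Finite :=
    (Finset.finite_toSet (Finset.Icc 2 11).powerset).subset fun D hD =>
      Finset.mem_coe.mpr (Finset.mem_powerset.mpr hD.1.1)
  have hex : ∀ D : Finset ℕ, ∃ R : Finset ℕ,
      IsPlainTravel 7 11 D ∧ IsNeighborlyTravel A 7 11 2 D →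
        ttFollows (reorient A R) 11 D ∧ IsNeighborly (reorient A R) 7 11 2 := by
    intro D
    by_cases h : IsPlainTravel 7 11 D ∧ IsNeighborlyTravel A 7 11 2 D
    · obtain ⟨R, -, h1, h2⟩ := h.2
      exact ⟨R, fun _ => ⟨h1, h2⟩⟩
    · exact ⟨∅, fun h' => absurd h' h⟩
  choose f hf using hex
  rw [Set.ncard_eq_toFinset_card _ hfin]
  have hinj : Set.InjOn (fun D => nbWord A (f D)) (hfin.toFinset : Set (Finset ℕ)) := by
    intro D hD D' hD' hw
    rw [Finset.mem_coe, Set.Finite.mem_toFinset] at hD hD'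
    exact nbWord_inj hA hD.1.2 hD'.1.2 (hf D hD).1 (hf D' hD').1 hw
  rw [← Finset.card_image_of_injOn hinj]
  apply nb_card_le (u := nbU A) (nbU_gauge A)
  intro w hw
  obtain ⟨D, hD, rfl⟩ := Finset.mem_image.mp hw
  rw [Set.Finite.mem_toFinset] at hD
  refine ⟨nbWord_lt _ _, nbZ A (f D), fun c h1 h2 => nbWord_testBit A (f D) c h1 h2, ?_⟩
  exact nbFar_of_neighborly (B := reorient A (f D))
    (fun S i j j' a b c d e g => nb_reorient_ne hA (f D) S i j j' a b c d e g) (hf D hD).2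
end

section
/- Every 8×11 sign matrix has at most 11 3-neighborly plain travels. (Equivalently, every rank 8 Lawrence oriented matroid on 11 elements has at most c_8(11,3) = 22 3-neighborly reorientations.) -/
theorem sum_sign_mod4 {κ : Type*} [DecidableEq κ] (s : Finset κ) (x : κ → ℤ)
    (hx : ∀ k ∈ s, x k = 1 ∨ x k = -1) :
    ∃ m : ℤ, ∑ k ∈ s, x k = (s.card : ℤ) - 1 + ∏ k ∈ s, x k + 4 * m := by
  have hp : ∀ t : Finset κ, (∀ k ∈ t, x k = 1 ∨ x k = -1) →
      (∏ k ∈ t, x k = 1 ∨ ∏ k ∈ t, x k = -1) := by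
    intro t
    induction t using Finset.induction_on with
    | empty => intro _; left; simp
    | insert a t ha ih =>
      intro h
      rw [Finset.prod_insert ha]
      rcases h a (by simp) with h1 | h1 <;>
        rcases ih (fun k hk => h k (by simp [hk])) with h2 | h2 <;> simp [h1, h2]
  induction s using Finset.induction_on with
  | empty => exact ⟨0, by simp⟩
  | insert a t ha ih =>
    obtain ⟨m, hm⟩ := ih (fun k hk => hx k (by simp [hk]))
    rw [Finset.prod_insert ha, Finset.sum_insert ha, Finset.card_insert_of_notMem ha, hm]
    push_cast
    rcases hx a (by simp) with h1 | h1
    · exact ⟨m, by rw [h1]; ring⟩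
    · rcases hp t (fun k hk => hx k (by simp [hk])) with h2 | h2
      · exact ⟨m, by rw [h1, h2]; ring⟩
      · exact ⟨m - 1, by rw [h1, h2]; ring⟩

section core
variable {ι : Type*} [Fintype ι] [DecidableEq ι]

/-- alternating sign function -/
structure AltSign (χ : ι → ι → ι → ℤ) : Prop where
  sgn : ∀ i j k, i ≠ j → i ≠ k → j ≠ k → χ i j k = 1 ∨ χ i j k = -1
  swap12 : ∀ i j k, χ j i k = -χ i j k
  swap23 : ∀ i j k, χ i k j = -χ i j k

theorem key_parity {χ : ι → ι → ι → ℤ} (hχ : AltSign χ) (hodd : Odd (Fintype.card ι))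
    (v w : ι → ℤ) (hv : ∀ i, v i = 1 ∨ v i = -1) (hw : ∀ i, w i = 1 ∨ w i = -1)
    (hvw : ∏ i, v i = ∏ i, w i)
    (i j : ι) (hij : i ≠ j)
    (bv : ∑ k, χ i j k * v k = 1 ∨ ∑ k, χ i j k * v k = -1)
    (bw : ∑ k, χ i j k * w k = 1 ∨ ∑ k, χ i j k * w k = -1) :
    v i * v j * ∑ k, χ i j k * v k = w i * w j * ∑ k, χ i j k * w k := by
  have z1 : ∀ a b, χ a b b = 0 := fun a b => by have := hχ.swap23 a b b; omega
  have z2 : ∀ a b, χ a b a = 0 := fun a b => by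
    have := hχ.swap23 a b a; have := hχ.swap12 a a b; omega
  set s : Finset ι := (Finset.univ.erase i).erase j with hs
  have hcard : s.card + 2 = Fintype.card ι := by
    have h1 : (Finset.univ.erase i).card + 1 = Fintype.card ι := by
      rw [Finset.card_erase_add_one (Finset.mem_univ i)]; rfl
    have h2 : s.card + 1 = (Finset.univ.erase i).card :=
      Finset.card_erase_add_one (by simp [hij.symm])
    omega
  have hsum : ∀ x : ι → ℤ, ∑ k, χ i j k * x k = ∑ k ∈ s, χ i j k * x k := by
    intro x
    rw [← Finset.add_sum_erase _ _ (Finset.mem_univ i),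
      ← Finset.add_sum_erase (Finset.univ.erase i) _ (show j ∈ _ by simp [hij.symm])]
    simp [z1, z2, hs]
  have hprod : ∀ x : ι → ℤ, ∏ k, x k = x i * (x j * ∏ k ∈ s, x k) := by
    intro x
    rw [← Finset.mul_prod_erase _ _ (Finset.mem_univ i),
      ← Finset.mul_prod_erase (Finset.univ.erase i) _ (show j ∈ _ by simp [hij.symm])]
  have hmem : ∀ k ∈ s, χ i j k = 1 ∨ χ i j k = -1 := by
    intro k hk
    simp only [hs, Finset.mem_erase, Finset.mem_univ, and_true] at hk
    exact hχ.sgn i j k hij (Ne.symm hk.2) (Ne.symm hk.1)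
  have hmod : ∀ x : ι → ℤ, (∀ i, x i = 1 ∨ x i = -1) → ∃ m : ℤ, ∑ k, χ i j k * x k =
      (s.card : ℤ) - 1 + (∏ k ∈ s, χ i j k) * (∏ k ∈ s, x k) + 4 * m := by
    intro x hx
    rw [hsum, ← Finset.prod_mul_distrib]
    apply sum_sign_mod4
    intro k hk
    rcases hmem k hk with h1 | h1 <;> rcases hx k with h2 | h2 <;> simp [h1, h2]
  have hsq : ∀ x : ι → ℤ, (∀ i, x i = 1 ∨ x i = -1) → 
      ∏ k ∈ s, x k = x i * x j * ∏ k, x k := by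
    intro x hx
    rw [hprod]
    rcases hx i with h1 | h1 <;> rcases hx j with h2 | h2 <;> simp [h1, h2]
  obtain ⟨m1, e1⟩ := hmod v hv
  obtain ⟨m2, e2⟩ := hmod w hw
  rw [hsq v hv] at e1
  rw [hsq w hw, ← hvw] at e2
  obtain ⟨q, hq⟩ := hodd
  have hq' : (s.card : ℤ) = 2 * q - 1 := by omega
  rw [hq'] at e1 e2
  generalize (∏ k ∈ s, χ i j k) = c at *
  generalize (∏ k, v k) = P at *
  generalize (∑ k, χ i j k * v k) = a at *
  generalize (∑ k, χ i j k * w k) = b at *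
  have e1' : a = 2 * q - 1 - 1 + v i * v j * (c * P) + 4 * m1 := by rw [e1]; ring
  have e2' : b = 2 * q - 1 - 1 + w i * w j * (c * P) + 4 * m2 := by rw [e2]; ring
  generalize c * P = cp at *
  clear e1 e2
  rcases hv i with h1 | h1 <;> rcases hv j with h2 | h2 <;>
  rcases hw i with h3 | h3 <;> rcases hw j with h4 | h4 <;>
  rw [h1, h2] at e1' ⊢ <;> rw [h3, h4] at e2' ⊢ <;> omega

theorem core_norm {χ : ι → ι → ι → ℤ} (hχ : AltSign χ) (hodd : Odd (Fintype.card ι))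
    (hcard : 4 ≤ Fintype.card ι)
    (V : Finset (ι → ℤ)) (hV : ∀ v ∈ V, ∀ i, v i = 1 ∨ v i = -1)
    (hP : ∀ v ∈ V, ∀ w ∈ V, ∏ i, v i = ∏ i, w i)
    (hB : ∀ v ∈ V, ∀ i j, i ≠ j → (∑ k, χ i j k * v k = 1 ∨ ∑ k, χ i j k * v k = -1)) :
    V.card ≤ Fintype.card ι := by
  rcases V.eq_empty_or_nonempty with h0 | ⟨w, hw⟩
  · simp [h0]
  set M : ι → ι → ℤ := fun i j => w i * w j * ∑ k, χ i j k * w k with hM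
  have hMsgn : ∀ i j, i ≠ j → M i j = 1 ∨ M i j = -1 := by
    intro i j hij
    simp only [hM]
    rcases hV w hw i with h1 | h1 <;> rcases hV w hw j with h2 | h2 <;>
      rcases hB w hw i j hij with h3 | h3 <;> simp [h1, h2, h3]
  have hMskew : ∀ i j, M j i = - M i j := by
    intro i j
    simp only [hM]
    have : ∑ k, χ j i k * w k = - ∑ k, χ i j k * w k := by
      rw [← Finset.sum_neg_distrib]
      refine Finset.sum_congr rfl fun k _ => ?_
      rw [hχ.swap12]; ring
    rw [this]; ring
  have hquad : ∀ v ∈ V, ∀ i j, i ≠ j → v i * v j = M i j * ∑ k, χ i j k * v k := by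
    intro v hv i j hij
    have := key_parity hχ hodd v w (hV v hv) (hV w hw) (hP v hv w hw) i j hij
      (hB v hv i j hij) (hB w hw i j hij)
    simp only [hM]
    rw [← this]
    rcases hB v hv i j hij with h3 | h3 <;> rw [h3] <;> ring
  let f : ι → (V → ℚ) := fun i v => ((v : ι → ℤ) i : ℚ)
  set W : Submodule ℚ (V → ℚ) := Submodule.span ℚ (Set.range f) with hW
  have hf : ∀ i, f i ∈ W := fun i => Submodule.subset_span ⟨i, rfl⟩
  have hfq : ∀ i j, i ≠ j → f i * f j = (M i j : ℚ) • ∑ k, (χ i j k : ℚ) • f k := by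
    intro i j hij
    ext v
    have := hquad v v.2 i j hij
    simp only [f, Pi.mul_apply, Pi.smul_apply, Finset.sum_apply, smul_eq_mul]
    exact_mod_cast this
  have hfsq : ∀ i, f i * f i = 1 := by
    intro i
    ext v
    simp only [f, Pi.mul_apply, Pi.one_apply]
    rcases hV v v.2 i with h | h <;> simp [h]
  have hff : ∀ i j, i ≠ j → f i * f j ∈ W := by
    intro i j hij
    rw [hfq i j hij]
    exact W.smul_mem _ (W.sum_mem fun k _ => W.smul_mem _ (hf k))
  have hcub : ∀ i j k, i ≠ j → f i * f j * f k - ((M i j * χ i j k : ℤ) : ℚ) • 1 ∈ W := by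
    intro i j k hij
    have : f i * f j * f k - ((M i j * χ i j k : ℤ) : ℚ) • 1 =
        (M i j : ℚ) • ∑ l ∈ Finset.univ.erase k, (χ i j l : ℚ) • (f l * f k) := by
      rw [hfq i j hij, smul_mul_assoc, Finset.sum_mul,
        ← Finset.add_sum_erase _ _ (Finset.mem_univ k)]
      simp only [smul_mul_assoc, hfsq]
      push_cast
      rw [smul_add, smul_smul]
      abel
    rw [this]
    refine W.smul_mem _ (W.sum_mem fun l hl => W.smul_mem _ (hff l k ?_))
    simpa using hl
  have htrip : ∃ i j k, i ≠ j ∧ i ≠ k ∧ j ≠ k ∧ M i j ≠ M j k := by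
    obtain ⟨t, -, ht⟩ := Finset.exists_subset_card_eq (s := (Finset.univ : Finset ι)) (n := 4) (by simpa using hcard)
    obtain ⟨a, b, c, d, hab, hac, had, hbc, hbd, hcd, -⟩ := Finset.card_eq_four.mp ht
    by_contra! hcon
    have h1 := hcon a b c hab hac hbc
    have h2 := hcon a b d hab had hbd
    have h3 := hcon d b c hbd.symm hcd.symm hbc
    have h4 := hMskew b d
    have h5 := hMsgn a b hab
    omega
  have hone : (1 : V → ℚ) ∈ W := by
    obtain ⟨i, j, k, hij, hik, hjk, hne⟩ := htrip
    have h1 := hcub i j k hij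
    have h2 := hcub j k i hjk
    have h3 := W.sub_mem h2 h1
    have hc : χ j k i = χ i j k := by
      have := hχ.swap23 j i k
      have := hχ.swap12 i j k
      omega
    have e : f j * f k * f i - ((M j k * χ j k i : ℤ) : ℚ) • (1 : V → ℚ) -
        (f i * f j * f k - ((M i j * χ i j k : ℤ) : ℚ) • 1)
        = (((M i j - M j k) * χ i j k : ℤ) : ℚ) • (1 : V → ℚ) := by
      rw [hc]
      have : f j * f k * f i = f i * f j * f k := by ring
      rw [this, sub_sub_sub_cancel_left, ← sub_smul]
      push_cast
      congr 1
      ring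
    rw [e] at h3
    refine (Submodule.smul_mem_iff W ?_).mp h3
    have : (M i j - M j k) * χ i j k ≠ 0 := by
      apply mul_ne_zero (sub_ne_zero.mpr hne)
      rcases hχ.sgn i j k hij hik hjk with h | h <;> simp [h]
    exact_mod_cast this
  have hmul : ∀ g ∈ W, ∀ h ∈ W, g * h ∈ W := by
    intro g hg h hh
    have hle : W * W ≤ W := by
      rw [hW, Submodule.span_mul_span, ← hW, Submodule.span_le]
      rintro _ ⟨_, ⟨i, rfl⟩, _, ⟨j, rfl⟩, rfl⟩
      by_cases hij : i = j
      · subst hij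
        simpa [hfsq] using hone
      · exact hff i j hij
    exact hle (Submodule.mul_mem_mul hg hh)
  have hprod : ∀ (s : Finset V) (g : V → (V → ℚ)), (∀ u ∈ s, g u ∈ W) → ∏ u ∈ s, g u ∈ W := by
    intro s g
    induction s using Finset.induction_on with
    | empty => intro _; simpa using hone
    | insert a t ha ih =>
      intro h
      rw [Finset.prod_insert ha]
      exact hmul _ (h a (by simp)) _ (ih fun u hu => h u (by simp [hu]))
  have hsep : ∀ v u : V, ∃ g ∈ W, g v = 1 ∧ (u ≠ v → g u = 0) := by
    intro v u
    by_cases huv : u = v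
    · exact ⟨1, hone, rfl, fun h => absurd huv h⟩
    · have : ∃ i, (u : ι → ℤ) i ≠ (v : ι → ℤ) i := by
        by_contra! hc
        exact huv (Subtype.ext (funext hc))
      obtain ⟨i, hi⟩ := this
      refine ⟨(1/2 : ℚ) • (1 + (((v : ι → ℤ) i : ℤ) : ℚ) • f i),
        W.smul_mem _ (W.add_mem hone (W.smul_mem _ (hf i))), ?_, fun _ => ?_⟩
      · simp only [f, Pi.smul_apply, Pi.add_apply, Pi.one_apply, smul_eq_mul]
        rcases hV v v.2 i with h | h <;> rw [h] <;> norm_num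
      · simp only [f, Pi.smul_apply, Pi.add_apply, Pi.one_apply, smul_eq_mul]
        rcases hV v v.2 i with h | h <;> rcases hV u u.2 i with h' | h' <;>
          first
          | (exact absurd (h'.trans h.symm) hi)
          | (rw [h, h']; norm_num)
  have hsingle : ∀ v : V, (Pi.single v 1 : V → ℚ) ∈ W := by
    intro v
    choose g hg1 hg2 hg3 using hsep v
    have : (Pi.single v 1 : V → ℚ) = ∏ u, g u := by
      ext x
      rw [Finset.prod_apply]
      by_cases hx : x = v
      · subst hx
        simp [hg2]
      · rw [Pi.single_eq_of_ne hx]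
        exact (Finset.prod_eq_zero (f := fun c => g c x) (Finset.mem_univ x) (hg3 x hx)).symm
    rw [this]
    exact hprod _ _ fun u _ => hg1 u
  have htop : W = ⊤ := by
    rw [eq_top_iff]
    intro h _
    have : h = ∑ v, h v • (Pi.single v 1 : V → ℚ) := by
      ext x
      simp [Finset.sum_apply, Pi.single_apply]
    rw [this]
    exact W.sum_mem fun v _ => W.smul_mem _ (hsingle v)
  have h1 : Module.finrank ℚ W ≤ Fintype.card ι := finrank_range_le_card f
  rw [htop, finrank_top, Module.finrank_fintype_fun_eq_card, Fintype.card_coe] at h1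
  exact h1

theorem core_bound {χ : ι → ι → ι → ℤ} (hχ : AltSign χ) (hodd : Odd (Fintype.card ι))
    (hcard : 4 ≤ Fintype.card ι)
    (V : Finset (ι → ℤ)) (hV : ∀ v ∈ V, ∀ i, v i = 1 ∨ v i = -1)
    (hN : ∀ v ∈ V, ∀ w ∈ V, v ≠ -w)
    (hB : ∀ v ∈ V, ∀ i j, i ≠ j → (∑ k, χ i j k * v k = 1 ∨ ∑ k, χ i j k * v k = -1)) :
    V.card ≤ Fintype.card ι := by
  have hps : ∀ v ∈ V, ∏ i, v i = 1 ∨ ∏ i, v i = -1 := by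
    intro v hv
    have : (∏ i, v i) * (∏ i, v i) = 1 := by
      rw [← Finset.prod_mul_distrib]
      refine Finset.prod_eq_one fun i _ => ?_
      rcases hV v hv i with h | h <;> simp [h]
    exact mul_self_eq_one_iff.mp this
  let φ : (ι → ℤ) → (ι → ℤ) := fun v i => (∏ i, v i) * v i
  have hφ : ∀ v ∈ V, φ v = v ∨ φ v = -v := by
    intro v hv
    rcases hps v hv with h | h
    · left; ext i; simp [φ, h]
    · right; ext i; simp [φ, h]
  have hinj : Set.InjOn φ V := by
    intro v hv w hw h
    rcases hφ v hv with h1 | h1 <;> rcases hφ w hw with h2 | h2 <;> rw [h1, h2] at h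
    · exact h
    · exact absurd h (hN v hv w hw)
    · exact absurd h.symm (hN w hw v hv)
    · exact neg_injective h
  rw [← Finset.card_image_of_injOn hinj]
  apply core_norm hχ hodd hcard
  · intro u hu i
    obtain ⟨v, hv, rfl⟩ := Finset.mem_image.mp hu
    rcases hφ v hv with h1 | h1 <;> rcases hV v hv i with h2 | h2 <;> simp [h1, h2]
  · have : ∀ u ∈ V.image φ, ∏ i, u i = 1 := by
      intro u hu
      obtain ⟨v, hv, rfl⟩ := Finset.mem_image.mp hu
      simp only [φ]
      rw [Finset.prod_mul_distrib, Finset.prod_const, Finset.card_univ]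
      rcases hps v hv with h | h <;> simp [h, hodd.neg_one_pow]
    intro v hv w hw
    rw [this v hv, this w hw]
  · intro u hu i j hij
    obtain ⟨v, hv, rfl⟩ := Finset.mem_image.mp hu
    rcases hφ v hv with h1 | h1 <;> rw [h1]
    · exact hB v hv i j hij
    · have := hB v hv i j hij
      simp only [Pi.neg_apply, mul_neg, Finset.sum_neg_distrib]
      omega
end core

theorem rowChange_some {A : ℕ → ℕ → ℤ} {n i c d : ℕ} :
    rowChange A n i c = some d ↔ d ≤ n ∧ (c < d ∧ A i d ≠ A i c) ∧
      ∀ d' < d, c < d' → A i d' = A i c := by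
  unfold rowChange
  rw [List.find?_range_eq_some]
  simp only [decide_eq_true_eq, List.mem_range, Bool.not_eq_true', decide_eq_false_iff_not,
    not_and, not_not]
  constructor
  · rintro ⟨h1, h2, h3⟩; exact ⟨by omega, h1, h3⟩
  · rintro ⟨h1, h2, h3⟩; exact ⟨h2, by omega, h3⟩

theorem rowChange_le {A : ℕ → ℕ → ℤ} {n i c d : ℕ} (h1 : d ≤ n) (h2 : c < d)
    (h3 : A i d ≠ A i c) : ∃ e, rowChange A n i c = some e ∧ e ≤ d := by
  have hex : ∃ e, e ≤ n ∧ c < e ∧ A i e ≠ A i c := ⟨d, h1, h2, h3⟩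
  classical
  refine ⟨Nat.find hex, rowChange_some.mpr ⟨(Nat.find_spec hex).1, (Nat.find_spec hex).2, ?_⟩,
    Nat.find_min' hex ⟨h1, h2, h3⟩⟩
  intro d' hd' hc
  have := Nat.find_min hex hd'
  have hn := (Nat.find_spec hex).1
  by_contra hne
  exact this ⟨by omega, hc, hne⟩

theorem greedy {B : ℕ → ℕ → ℤ} {n r : ℕ} (c : ℕ → ℕ) (h1 : 1 ≤ c 1)
    (hn : ∀ t, 1 ≤ t → t ≤ r → c (t + 1) ≤ n)
    (hlt : ∀ t, 1 ≤ t → t ≤ r → c t < c (t + 1))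
    (hne : ∀ t, 1 ≤ t → t ≤ r → B t (c (t + 1)) ≠ B t (c t)) :
    ttPositive B r n := by
  have : ∀ t ≤ r, ∃ e, ttEntry B n (t + 1) = some e ∧ e ≤ c (t + 1) := by
    intro t
    induction t with
    | zero => intro _; exact ⟨1, rfl, h1⟩
    | succ t ih =>
      intro ht
      obtain ⟨e, he, hec⟩ := ih (by omega)
      have a1 := hn (t + 1) (by omega) ht
      have a2 := hlt (t + 1) (by omega) ht
      have a3 := hne (t + 1) (by omega) ht
      have key : ∃ d, rowChange B n (t + 1) e = some d ∧ d ≤ c (t + 1 + 1) := by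
        by_cases hq : B (t + 1) (c (t + 1 + 1)) = B (t + 1) e
        · have hq2 : B (t + 1) (c (t + 1)) ≠ B (t + 1) e := fun h => a3 (hq.trans h.symm)
          have : e ≠ c (t + 1) := fun h => hq2 (by rw [h])
          obtain ⟨d, hd, hd2⟩ := rowChange_le (A := B) (n := n) (i := t + 1) (c := e)
            (d := c (t + 1)) (by omega) (by omega) hq2
          exact ⟨d, hd, by omega⟩
        · exact rowChange_le a1 (by omega) hq
      obtain ⟨d, hd, hd2⟩ := key
      refine ⟨d, ?_, hd2⟩
      show (ttEntry B n (t + 1)).bind (rowChange B n (t + 1)) = some d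
      rw [he]
      exact hd
  obtain ⟨e, he, -⟩ := this r le_rfl
  unfold ttPositive
  rw [he]; rfl

theorem ttEntry_ge {B : ℕ → ℕ → ℤ} {n : ℕ} : ∀ i e, ttEntry B n i = some e → 1 ≤ e := by
  intro i
  induction i with
  | zero => intro e h; simp [ttEntry] at h
  | succ i ih =>
    intro e h
    cases i with
    | zero => simp [ttEntry] at h; omega
    | succ i =>
      change (ttEntry B n (i + 1)).bind (rowChange B n (i + 1)) = some e at h
      obtain ⟨d, hd, hd2⟩ := Option.bind_eq_some_iff.mp h
      have := (rowChange_some.mp hd2).2.1.1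
      omega

theorem ttEntry_congr {B B' : ℕ → ℕ → ℤ} {n : ℕ} (h : ∀ i j, 1 ≤ j → j ≤ n → B' i j = - B i j)
    (hn : 1 ≤ n) :
    ∀ i, ttEntry B' n i = ttEntry B n i ∧ ∀ e, ttEntry B n i = some e → e ≤ n := by
  intro i
  induction i with
  | zero => exact ⟨rfl, fun e h => by simp [ttEntry] at h⟩
  | succ i ih =>
    cases i with
    | zero => exact ⟨rfl, fun e h => by simp [ttEntry] at h; omega⟩
    | succ i =>
      constructor
      · change (ttEntry B' n (i + 1)).bind (rowChange B' n (i + 1)) =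
          (ttEntry B n (i + 1)).bind (rowChange B n (i + 1))
        rw [ih.1]
        cases hE : ttEntry B n (i + 1) with
        | none => rfl
        | some c =>
          have hc1 := ttEntry_ge _ _ hE
          have hc2 := ih.2 _ hE
          show rowChange B' n (i + 1) c = rowChange B n (i + 1) c
          ext d
          rw [rowChange_some, rowChange_some]
          constructor
          · rintro ⟨x, ⟨y, z⟩, w⟩
            rw [h _ _ (by omega) x, h _ _ hc1 hc2] at z
            refine ⟨x, ⟨y, fun q => z (by rw [q])⟩, fun d' e1 e2 => ?_⟩
            have := w d' e1 e2
            rw [h _ _ (by omega) (by omega), h _ _ hc1 hc2] at this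
            omega
          · rintro ⟨x, ⟨y, z⟩, w⟩
            rw [h _ _ (by omega) x, h _ _ hc1 hc2]
            refine ⟨x, ⟨y, fun q => z (by omega)⟩, fun d' e1 e2 => ?_⟩
            have := w d' e1 e2
            rw [h _ _ (by omega) (by omega), this]
      · intro e he
        change (ttEntry B n (i + 1)).bind (rowChange B n (i + 1)) = some e at he
        obtain ⟨d, hd, hd2⟩ := Option.bind_eq_some_iff.mp he
        exact (rowChange_some.mp hd2).1

theorem ttEntry_none_mono {B : ℕ → ℕ → ℤ} {n i : ℕ} (hi : 1 ≤ i) (h : ttEntry B n i = none) :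
    ∀ k, ttEntry B n (i + k) = none := by
  intro k
  induction k with
  | zero => exact h
  | succ k ih =>
    obtain ⟨m, hm⟩ : ∃ m, i + k = m + 1 := ⟨i + k - 1, by omega⟩
    rw [← add_assoc, hm]
    rw [hm] at ih
    change (ttEntry B n (m + 1)).bind (rowChange B n (m + 1)) = none
    rw [ih]; rfl

theorem ttFollows_mem {B : ℕ → ℕ → ℤ} {n : ℕ} {D : Finset ℕ} (h : ttFollows B n D) (c : ℕ) :
    c ∈ D ↔ ∃ i, 2 ≤ i ∧ ttEntry B n i = some c := by
  rw [h.2 c]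
  constructor
  · rintro ⟨i, h1, _, h3⟩; exact ⟨i, h1, h3⟩
  · rintro ⟨i, h1, h3⟩
    refine ⟨i, h1, ?_, h3⟩
    by_contra hcon
    have := ttEntry_none_mono (by omega) h.1 (i - (D.card + 2))
    rw [show D.card + 2 + (i - (D.card + 2)) = i by omega, h3] at this
    cases this

/-- row of column `m` in the diagonal of the complement of `{i,j,k}` -/
def rowIdx (i j k m : ℕ) : ℕ :=
  m - ((if i < m then 1 else 0) + (if j < m then 1 else 0) + (if k < m then 1 else 0))

/-- product of the diagonal of the complement of `{i,j,k}` -/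
def diagProd (A : ℕ → ℕ → ℤ) (i j k : ℕ) : ℤ :=
  ∏ m ∈ Finset.Icc 1 11 \ {i, j, k}, A (rowIdx i j k m) m

/-- dual chirotope -/
def chi (A : ℕ → ℕ → ℤ) (i j k : ℕ) : ℤ :=
  Int.sign ((j : ℤ) - i) * Int.sign ((k : ℤ) - i) * Int.sign ((k : ℤ) - j) * (-1) ^ (i + j + k) *
    diagProd A i j k

theorem rowIdx_mem {i j k m : ℕ} (hi : 1 ≤ i ∧ i ≤ 11) (hj : 1 ≤ j ∧ j ≤ 11) (hk : 1 ≤ k ∧ k ≤ 11)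
    (hij : i ≠ j) (hik : i ≠ k) (hjk : j ≠ k) (hm : 1 ≤ m ∧ m ≤ 11) (h1 : m ≠ i) (h2 : m ≠ j)
    (h3 : m ≠ k) : 1 ≤ rowIdx i j k m ∧ rowIdx i j k m ≤ 8 := by
  unfold rowIdx
  split_ifs <;> omega

theorem sign_prod {κ : Type*} (s : Finset κ) (x : κ → ℤ)
    (hx : ∀ k ∈ s, x k = 1 ∨ x k = -1) : ∏ k ∈ s, x k = 1 ∨ ∏ k ∈ s, x k = -1 := by
  apply mul_self_eq_one_iff.mp
  rw [← Finset.prod_mul_distrib]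
  refine Finset.prod_eq_one fun i hi => ?_
  rcases hx i hi with h | h <;> simp [h]

theorem chi_sgn {A : ℕ → ℕ → ℤ} (hA : IsSignMatrix 8 11 A) {i j k : ℕ} (hi : 1 ≤ i ∧ i ≤ 11)
    (hj : 1 ≤ j ∧ j ≤ 11) (hk : 1 ≤ k ∧ k ≤ 11)
    (hij : i ≠ j) (hik : i ≠ k) (hjk : j ≠ k) : chi A i j k = 1 ∨ chi A i j k = -1 := by
  have hs : ∀ a b : ℕ, a ≠ b → Int.sign ((b : ℤ) - a) = 1 ∨ Int.sign ((b : ℤ) - a) = -1 := by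
    intro a b hab
    rcases lt_or_gt_of_ne hab with h | h
    · left; exact Int.sign_eq_one_of_pos (by omega)
    · right; exact Int.sign_eq_neg_one_of_neg (by omega)
  have hd : diagProd A i j k = 1 ∨ diagProd A i j k = -1 := by
    apply sign_prod
    intro m hm
    simp only [Finset.mem_sdiff, Finset.mem_Icc, Finset.mem_insert, Finset.mem_singleton,
      not_or] at hm
    obtain ⟨hm, h1, h2, h3⟩ := hm
    have := rowIdx_mem hi hj hk hij hik hjk hm h1 h2 h3
    exact hA _ _ this.1 this.2 hm.1 hm.2
  unfold chi
  rcases hs i j hij with e1 | e1 <;> rcases hs i k hik with e2 | e2 <;>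
    rcases hs j k hjk with e3 | e3 <;> rcases hd with e4 | e4 <;>
    rcases neg_one_pow_eq_or ℤ (i + j + k) with e5 | e5 <;> rw [e1, e2, e3, e4, e5] <;> norm_num

theorem sign_sub_comm (a b : ℤ) : Int.sign (a - b) = - Int.sign (b - a) := by
  rw [← Int.sign_neg, neg_sub]

theorem chi_swap12 (A : ℕ → ℕ → ℤ) (i j k : ℕ) : chi A j i k = - chi A i j k := by
  have : diagProd A j i k = diagProd A i j k := by
    unfold diagProd
    rw [Finset.insert_comm]
    refine Finset.prod_congr rfl fun m _ => ?_
    congr 1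
    unfold rowIdx; omega
  unfold chi
  rw [this, sign_sub_comm (i : ℤ) j, add_comm j i]
  ring

theorem chi_swap23 (A : ℕ → ℕ → ℤ) (i j k : ℕ) : chi A i k j = - chi A i j k := by
  have : diagProd A i k j = diagProd A i j k := by
    unfold diagProd
    rw [Finset.pair_comm]
    refine Finset.prod_congr rfl fun m _ => ?_
    congr 1
    unfold rowIdx; omega
  unfold chi
  rw [this, sign_sub_comm (j : ℤ) k, add_right_comm i k j]
  ring

theorem chi_step {A : ℕ → ℕ → ℤ} (hA : IsSignMatrix 8 11 A) {i j k l t : ℕ} (hi : 1 ≤ i)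
    (hij : i < j) (hj : j ≤ 11) (hk : 1 ≤ k) (hkl : k < l) (hl : l ≤ 11)
    (hki : k ≠ i) (hkj : k ≠ j) (hli : l ≠ i) (hlj : l ≠ j)
    (hbet : ∀ m, k < m → m < l → m = i ∨ m = j)
    (ht : t = k - ((if i < k then 1 else 0) + (if j < k then 1 else 0))) :
    chi A i j k * chi A i j l = - (A t k * A t l) := by
  have hb1 := hbet (k + 1) (by omega)
  have hb2 := hbet (k + 2) (by omega)
  have hb3 := hbet (k + 3) (by omega)
  have hbi : ∀ m, 1 ≤ m → m ≤ 11 → m ≠ i → m ≠ j → m ≠ k → m ≠ l →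
      rowIdx i j k m = rowIdx i j l m := by
    intro m _ _ h1 h2 h3 h4
    have := hbet m
    unfold rowIdx
    have : k < m ↔ l < m := by omega
    simp [this]
  set T := Finset.Icc 1 11 \ {i, j, k, l} with hT
  have e1 : diagProd A i j k = A t l * ∏ m ∈ T, A (rowIdx i j k m) m := by
    have hs : Finset.Icc 1 11 \ {i, j, k} = insert l T := by
      ext m
      simp only [hT, Finset.mem_sdiff, Finset.mem_Icc, Finset.mem_insert, Finset.mem_singleton]
      omega
    unfold diagProd
    rw [hs, Finset.prod_insert (by simp [hT])]
    congr 2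
    rw [ht]; unfold rowIdx
    split_ifs <;> omega
  have e2 : diagProd A i j l = A t k * ∏ m ∈ T, A (rowIdx i j k m) m := by
    have hs : Finset.Icc 1 11 \ {i, j, l} = insert k T := by
      ext m
      simp only [hT, Finset.mem_sdiff, Finset.mem_Icc, Finset.mem_insert, Finset.mem_singleton]
      omega
    unfold diagProd
    rw [hs, Finset.prod_insert (by simp [hT])]
    congr 1
    · congr 1
      rw [ht]; unfold rowIdx
      split_ifs <;> omega
    · refine Finset.prod_congr rfl fun m hm => ?_
      simp only [hT, Finset.mem_sdiff, Finset.mem_Icc, Finset.mem_insert, Finset.mem_singleton,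
        not_or] at hm
      rw [hbi m] <;> omega
  have e3 : (∏ m ∈ T, A (rowIdx i j k m) m) * (∏ m ∈ T, A (rowIdx i j k m) m) = 1 := by
    apply mul_self_eq_one_iff.mpr
    apply sign_prod
    intro m hm
    simp only [hT, Finset.mem_sdiff, Finset.mem_Icc, Finset.mem_insert, Finset.mem_singleton,
      not_or] at hm
    obtain ⟨hm, h1, h2, h3, h4⟩ := hm
    have := rowIdx_mem (i := i) (j := j) (k := k) (m := m) (by omega) (by omega) (by omega)
      (by omega) (by omega) (by omega) hm h1 h2 h3
    exact hA _ _ this.1 this.2 hm.1 hm.2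
  have sp : ∀ a b : ℕ, a < b → Int.sign ((b : ℤ) - a) = 1 :=
    fun a b h => Int.sign_eq_one_of_pos (by omega)
  have sn : ∀ a b : ℕ, b < a → Int.sign ((b : ℤ) - a) = -1 :=
    fun a b h => Int.sign_eq_neg_one_of_neg (by omega)
  have e4 : (Int.sign ((k : ℤ) - i) * Int.sign ((k : ℤ) - j) * (-1) ^ (i + j + k)) *
      (Int.sign ((l : ℤ) - i) * Int.sign ((l : ℤ) - j) * (-1) ^ (i + j + l)) = -1 := by
    have hsq : ((-1 : ℤ) ^ (i + j + k)) * ((-1 : ℤ) ^ (i + j + k)) = 1 := by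
      rw [← mul_pow]; norm_num
    have hd : l = k + 1 ∨ l = k + 2 ∨ l = k + 3 := by omega
    have hpow : (-1 : ℤ) ^ (i + j + l) = (-1 : ℤ) ^ (i + j + k) * (-1) ^ (l - k) := by
      rw [← pow_add]; congr 1; omega
    rw [hpow]
    generalize (-1 : ℤ) ^ (i + j + k) = p at hsq
    have goal : ∀ a b c d q : ℤ, a * b * c * d * q = -1 →
        a * b * p * (c * d * (p * q)) = -1 := by
      intro a b c d q h
      calc a * b * p * (c * d * (p * q)) = (a * b * c * d * q) * (p * p) := by ring
        _ = -1 := by rw [h, hsq]; norm_num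
    apply goal
    have hpw : (-1 : ℤ) ^ (l - k) = -1 ∧ (l = k + 1 ∨ l = k + 3) ∨
        (-1 : ℤ) ^ (l - k) = 1 ∧ l = k + 2 := by
      rcases hd with h | h | h <;> subst h
      · left; simp
      · right; simp
      · left; refine ⟨?_, by omega⟩
        rw [show k + 3 - k = 3 by omega]; norm_num
    rcases lt_or_gt_of_ne hki with a1 | a1 <;> rcases lt_or_gt_of_ne hkj with a2 | a2 <;>
      rcases lt_or_gt_of_ne hli with a3 | a3 <;> rcases lt_or_gt_of_ne hlj with a4 | a4 <;>
      rcases hpw with ⟨hp, hq⟩ | ⟨hp, hq⟩ <;>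
      first
      | (exfalso; omega)
      | (rw [hp]; simp only [sp _ _ a1, sn _ _ a1, sp _ _ a2, sn _ _ a2, sp _ _ a3, sn _ _ a3,
          sp _ _ a4, sn _ _ a4]; norm_num)
  unfold chi
  rw [sp _ _ hij, e1, e2]
  calc _ = ((Int.sign ((k : ℤ) - i) * Int.sign ((k : ℤ) - j) * (-1) ^ (i + j + k)) *
      (Int.sign ((l : ℤ) - i) * Int.sign ((l : ℤ) - j) * (-1) ^ (i + j + l))) *
      ((∏ m ∈ T, A (rowIdx i j k m) m) * (∏ m ∈ T, A (rowIdx i j k m) m)) *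
      (A t k * A t l) := by ring
    _ = _ := by rw [e3, e4]; ring

/-- `t`-th column of the complement of `{i,j}` (for `i < j`) -/
def colOf (i j t : ℕ) : ℕ := if t < i then t else if t + 1 < j then t + 1 else t + 2

/-- sign vector of `R` -/
def sgnOf (R : Finset ℕ) (k : ℕ) : ℤ := if k ∈ R then -1 else 1

theorem sgnOf_or (R : Finset ℕ) (k : ℕ) : sgnOf R k = 1 ∨ sgnOf R k = -1 := by
  unfold sgnOf; split_ifs <;> simp

theorem reorient_eq (A : ℕ → ℕ → ℤ) (R : Finset ℕ) (i j : ℕ) :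
    reorient A R i j = sgnOf R j * A i j := by
  unfold reorient sgnOf; split_ifs <;> simp

theorem four_le {A : ℕ → ℕ → ℤ} (hA : IsSignMatrix 8 11 A) {R : Finset ℕ}
    (hN : IsNeighborly (reorient A R) 8 11 3) {i j : ℕ} (hi : 1 ≤ i) (hij : i < j) (hj : j ≤ 11)
    (s : ℤ) (hs : s = 1 ∨ s = -1) :
    4 ≤ ((Finset.Icc 1 11 \ {i, j}).filter (fun k => chi A i j k * sgnOf R k = s)).card := by
  by_contra hcon
  set S := (Finset.Icc 1 11 \ {i, j}).filter (fun k => chi A i j k * sgnOf R k = s) with hS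
  apply hN S (fun k hk => by
    simp only [hS, Finset.mem_filter, Finset.mem_sdiff] at hk; exact hk.1.1) (by omega)
  have hflip : ∀ k, 1 ≤ k → k ≤ 11 → k ≠ i → k ≠ j →
      sgnOf S k * (chi A i j k * sgnOf R k) = -s := by
    intro k h1 h2 h3 h4
    by_cases hk : k ∈ S
    · have : chi A i j k * sgnOf R k = s := (Finset.mem_filter.mp hk).2
      rw [this]; simp [sgnOf, hk]
    · have h5 : chi A i j k * sgnOf R k ≠ s := by
        intro h
        apply hk
        simp only [hS, Finset.mem_filter, Finset.mem_sdiff, Finset.mem_Icc, Finset.mem_insert,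
          Finset.mem_singleton, not_or]
        exact ⟨⟨⟨h1, h2⟩, h3, h4⟩, h⟩
      have h6 : sgnOf S k = 1 := by simp [sgnOf, hk]
      rw [h6]
      rcases chi_sgn hA (i := i) (j := j) (k := k) (by omega) (by omega) (by omega) (by omega)
        (by omega) (by omega) with a | a <;> rcases sgnOf_or R k with b | b <;>
        rcases hs with c | c <;> rw [a, b, c] at h5 <;> rw [a, b, c] <;> revert h5 <;> norm_num
  apply greedy (colOf i j)
  · unfold colOf; split_ifs <;> omega
  · intro t _ _; unfold colOf; split_ifs <;> omega
  · intro t _ _; unfold colOf; split_ifs <;> omega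
  · intro t ht1 ht2 heq
    have f1 : 1 ≤ colOf i j t := by unfold colOf; split_ifs <;> omega
    have f2 : colOf i j t < colOf i j (t + 1) := by unfold colOf; split_ifs <;> omega
    have f3 : colOf i j (t + 1) ≤ 11 := by unfold colOf; split_ifs <;> omega
    have f4 : colOf i j t ≠ i := by unfold colOf; split_ifs <;> omega
    have f5 : colOf i j t ≠ j := by unfold colOf; split_ifs <;> omega
    have f6 : colOf i j (t + 1) ≠ i := by unfold colOf; split_ifs <;> omega
    have f7 : colOf i j (t + 1) ≠ j := by unfold colOf; split_ifs <;> omega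
    have f8 : ∀ m, colOf i j t < m → m < colOf i j (t + 1) → m = i ∨ m = j := by
      intro m; unfold colOf; split_ifs <;> omega
    have f9 : t = colOf i j t - ((if i < colOf i j t then 1 else 0) +
        (if j < colOf i j t then 1 else 0)) := by
      unfold colOf; split_ifs <;> omega
    have st := chi_step hA hi hij hj f1 f2 f3 f4 f5 f6 f7 f8 f9
    generalize colOf i j t = k at *
    generalize colOf i j (t + 1) = l at *
    have g1 := hflip k (by omega) (by omega) f4 f5
    have g2 := hflip l (by omega) (by omega) f6 f7
    rw [reorient_eq, reorient_eq, reorient_eq, reorient_eq] at heq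
    have hk := hA t k ht1 ht2 (by omega) (by omega)
    have hl := hA t l ht1 ht2 (by omega) (by omega)
    have ss : s * s = 1 := by rcases hs with h | h <;> simp [h]
    have h1 : (sgnOf S k * (sgnOf R k * A t k)) * (sgnOf S l * (sgnOf R l * A t l)) = -1 := by
      have : (sgnOf S k * (sgnOf R k * A t k)) * (sgnOf S l * (sgnOf R l * A t l)) =
        (sgnOf S k * sgnOf R k * sgnOf S l * sgnOf R l) * (A t k * A t l) := by ring
      rw [this, show A t k * A t l = -(chi A i j k * chi A i j l) by rw [st]; ring]
      calc _ = - ((sgnOf S k * (chi A i j k * sgnOf R k)) *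
            (sgnOf S l * (chi A i j l * sgnOf R l))) := by ring
        _ = -1 := by rw [g1, g2]; rw [neg_mul_neg, ss]
    rw [heq] at h1
    nlinarith [mul_self_nonneg (sgnOf S k * (sgnOf R k * A t k))]

theorem balanced_lt {A : ℕ → ℕ → ℤ} (hA : IsSignMatrix 8 11 A) {R : Finset ℕ}
    (hN : IsNeighborly (reorient A R) 8 11 3) {i j : ℕ} (hi : 1 ≤ i) (hij : i < j) (hj : j ≤ 11) :
    ∑ k ∈ Finset.Icc 1 11, chi A i j k * sgnOf R k = 1 ∨
    ∑ k ∈ Finset.Icc 1 11, chi A i j k * sgnOf R k = -1 := by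
  have h1 := four_le hA hN hi hij hj 1 (Or.inl rfl)
  have h2 := four_le hA hN hi hij hj (-1) (Or.inr rfl)
  have hsub : ({i, j} : Finset ℕ) ⊆ Finset.Icc 1 11 := by
    intro m; simp only [Finset.mem_insert, Finset.mem_singleton, Finset.mem_Icc]; omega
  have e1 : ∑ k ∈ Finset.Icc 1 11, chi A i j k * sgnOf R k =
      ∑ k ∈ Finset.Icc 1 11 \ {i, j}, chi A i j k * sgnOf R k := by
    rw [← Finset.sum_sdiff hsub, Finset.sum_pair (by omega)]
    simp [chi]
  have hc : (Finset.Icc 1 11 \ {i, j}).card = 9 := by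
    rw [Finset.card_sdiff_of_subset hsub, Finset.card_pair (by omega)]; simp
  set K := Finset.Icc 1 11 \ {i, j} with hK
  have hsg : ∀ k ∈ K, chi A i j k * sgnOf R k = 1 ∨ chi A i j k * sgnOf R k = -1 := by
    intro k hk
    simp only [hK, Finset.mem_sdiff, Finset.mem_Icc, Finset.mem_insert,
      Finset.mem_singleton, not_or] at hk
    rcases chi_sgn hA (i := i) (j := j) (k := k) (by omega) (by omega) (by omega) (by omega)
        (by omega) (by omega) with a | a <;> rcases sgnOf_or R k with b | b <;> simp [a, b]
  have hneg : K.filter (fun k => ¬ chi A i j k * sgnOf R k = 1) =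
      K.filter (fun k => chi A i j k * sgnOf R k = -1) := by
    apply Finset.filter_congr
    intro k hk
    rcases hsg k hk with h | h <;> rw [h] <;> norm_num
  have e2 := Finset.sum_filter_add_sum_filter_not K (fun k => chi A i j k * sgnOf R k = 1)
    (fun k => chi A i j k * sgnOf R k)
  have e3 := Finset.card_filter_add_card_filter_not (s := K)
    (fun k => chi A i j k * sgnOf R k = 1)
  rw [hneg] at e2 e3
  rw [Finset.sum_congr rfl (g := fun _ => (1 : ℤ)) (fun k hk => (Finset.mem_filter.mp hk).2),
    Finset.sum_congr rfl (s₁ := K.filter (fun k => chi A i j k * sgnOf R k = -1))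
      (g := fun _ => (-1 : ℤ)) (fun k hk => (Finset.mem_filter.mp hk).2)] at e2
  simp only [Finset.sum_const, nsmul_eq_mul] at e2
  rw [e1]
  omega

theorem balanced_ne {A : ℕ → ℕ → ℤ} (hA : IsSignMatrix 8 11 A) {R : Finset ℕ}
    (hN : IsNeighborly (reorient A R) 8 11 3) {i j : ℕ} (hi : 1 ≤ i ∧ i ≤ 11) (hij : i ≠ j)
    (hj : 1 ≤ j ∧ j ≤ 11) :
    ∑ k ∈ Finset.Icc 1 11, chi A i j k * sgnOf R k = 1 ∨
    ∑ k ∈ Finset.Icc 1 11, chi A i j k * sgnOf R k = -1 := by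
  rcases lt_or_gt_of_ne hij with h | h
  · exact balanced_lt hA hN hi.1 h hj.2
  · have := balanced_lt hA hN hj.1 h hi.2
    simp only [chi_swap12 A i j, neg_mul, Finset.sum_neg_distrib] at this
    omega

/-- the type of columns -/
abbrev Cols : Type := {x : ℕ // x ∈ Finset.Icc 1 11}

/-- Every 8×11 sign matrix has at most 11 3-neighborly plain travels. -/
theorem statement_15 (A : ℕ → ℕ → ℤ) (hA : IsSignMatrix 8 11 A) :
    {D : Finset ℕ | IsPlainTravel 8 11 D ∧ IsNeighborlyTravel A 8 11 3 D}.ncard ≤ 11 := by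
  classical
  set X := {D : Finset ℕ | IsPlainTravel 8 11 D ∧ IsNeighborlyTravel A 8 11 3 D} with hX
  have hfin : X.Finite := by
    apply Set.Finite.subset (Finset.finite_toSet (Finset.Icc 2 11).powerset)
    intro D hD
    exact Finset.mem_coe.mpr (Finset.mem_powerset.mpr hD.1.1)
  have hR : ∀ D : Finset ℕ, ∃ R : Finset ℕ, D ∈ X → ttFollows (reorient A R) 11 D ∧
      IsNeighborly (reorient A R) 8 11 3 := by
    intro D
    by_cases h : D ∈ X
    · obtain ⟨R, _, h2, h3⟩ := h.2
      exact ⟨R, fun _ => ⟨h2, h3⟩⟩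
    · exact ⟨∅, fun h' => absurd h' h⟩
  choose R hR using hR
  let u : Finset ℕ → (Cols → ℤ) := fun D k => sgnOf (R D) k
  have hcard : Fintype.card Cols = 11 := by simp [Cols]
  have hdet : ∀ D ∈ X, ∀ D' ∈ X, u D = - u D' → D = D' := by
    intro D hD D' hD' h
    have hc := ttEntry_congr (B := reorient A (R D')) (B' := reorient A (R D)) (n := 11) (by
      intro i j h1 h2
      have := congrFun h ⟨j, Finset.mem_Icc.mpr ⟨h1, h2⟩⟩
      simp only [u, Pi.neg_apply] at this
      rw [reorient_eq, reorient_eq, this]; ring) (by norm_num)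
    ext c
    rw [ttFollows_mem (hR D hD).1, ttFollows_mem (hR D' hD').1]
    simp only [fun i => (hc i).1]
  have hne : ∀ D D', u D = u D' → u D = - u D' → False := by
    intro D D' h1 h2
    have a := congrFun (h1.symm.trans h2) ⟨1, by simp⟩
    have b := sgnOf_or (R D') 1
    simp only [u, Pi.neg_apply] at a
    omega
  have hinj : Set.InjOn u X := by
    intro D hD D' hD' h
    have hc : ∀ i, ttEntry (reorient A (R D)) 11 i = ttEntry (reorient A (R D')) 11 i := by
      intro i
      have h1 := ttEntry_congr (B := reorient A (R D)) (B' := fun i j => - reorient A (R D) i j)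
        (n := 11) (fun _ _ _ _ => rfl) (by norm_num) i
      have h2 := ttEntry_congr (B := reorient A (R D')) (B' := fun i j => - reorient A (R D) i j)
        (n := 11) (by
          intro i j h1 h2
          have := congrFun h ⟨j, Finset.mem_Icc.mpr ⟨h1, h2⟩⟩
          simp only [u] at this
          simp only [reorient_eq, this]) (by norm_num) i
      exact h1.1.symm.trans h2.1
    ext c
    rw [ttFollows_mem (hR D hD).1, ttFollows_mem (hR D' hD').1]
    simp only [hc]
  have hsumι : ∀ g : ℕ → ℤ, ∑ k : Cols, g k = ∑ k ∈ Finset.Icc 1 11, g k :=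
    fun g => Finset.sum_coe_sort (Finset.Icc 1 11) g
  have hmem : ∀ x : Cols, 1 ≤ (x : ℕ) ∧ (x : ℕ) ≤ 11 := fun x => Finset.mem_Icc.mp x.2
  have hval : ∀ x y : Cols, x ≠ y → (x : ℕ) ≠ y := fun x y h h' => h (Subtype.ext h')
  have main := core_bound (ι := Cols) (χ := fun i j k => chi A i j k)
    ⟨fun i j k h1 h2 h3 => chi_sgn hA (hmem i) (hmem j) (hmem k) (hval _ _ h1) (hval _ _ h2)
      (hval _ _ h3), fun i j k => chi_swap12 A i j k, fun i j k => chi_swap23 A i j k⟩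
    (by rw [hcard]; decide) (by rw [hcard]; norm_num) (hfin.toFinset.image u)
    (by
      intro v hv i
      obtain ⟨D, _, rfl⟩ := Finset.mem_image.mp hv
      exact sgnOf_or _ _)
    (by
      intro v hv w hw h
      obtain ⟨D, hD, rfl⟩ := Finset.mem_image.mp hv
      obtain ⟨D', hD', rfl⟩ := Finset.mem_image.mp hw
      have := hdet D (hfin.mem_toFinset.mp hD) D' (hfin.mem_toFinset.mp hD') h
      exact hne D D' (by rw [this]) h)
    (by
      intro v hv i j hij
      obtain ⟨D, hD, rfl⟩ := Finset.mem_image.mp hv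
      have := balanced_ne hA (hR D (hfin.mem_toFinset.mp hD)).2 (hmem i) (hval _ _ hij) (hmem j)
      rw [← hsumι (fun k => chi A i j k * sgnOf (R D) k)] at this
      exact this)
  rw [hcard, Finset.card_image_of_injOn (by simpa using hinj)] at main
  rwa [Set.ncard_eq_toFinset_card X hfin]
end

section
/- Every 8×12 sign matrix has at most 12 3-neighborly plain travels. (Equivalently, every rank 8 Lawrence oriented matroid on 12 elements has at most c_8(12,3) = 24 3-neighborly reorientations.) -/
namespace LT

/-- Boolean operations, to be interpreted in `Bool` or bit-parallel in `ℕ`. -/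
structure Ops (α : Type) where
  xor : α → α → α
  and : α → α → α
  or : α → α → α
  one : α
  zero : α

def boolOps : Ops Bool := ⟨Bool.xor, Bool.and, Bool.or, true, false⟩
def natOps (N : ℕ) : Ops ℕ := ⟨Nat.xor, Nat.land, Nat.lor, 2 ^ N - 1, 0⟩

section
variable {α : Type} (o : Ops α)

def x3 (a b c : α) : α := o.xor (o.xor a b) c
def maj (a b c : α) : α := o.or (o.and a b) (o.and c (o.xor a b))
def two4 (a b c d : α) : α :=
  o.and (o.xor o.one (o.xor (o.xor a b) (o.xor c d))) (o.or (o.xor a b) (o.xor a c))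
/-- weight 4 or 5 among nine -/
def bal9 (a b c d e f g h i : α) : α :=
  two4 o (maj o a b c) (maj o d e f) (maj o g h i)
    (maj o (x3 o a b c) (x3 o d e f) (x3 o g h i))
/-- nine entries: weight 4 or 5; eight entries: weight 4 -/
def bal : List α → α
  | [a, b, c, d, e, f, g, h, i] => bal9 o a b c d e f g h i
  | [a, b, c, d, e, f, g, h] =>
      o.and (bal9 o a b c d e f g h o.zero) (bal9 o a b c d e f g h o.one)
  | _ => o.one
def sgn (b : ℕ → ℕ → α) : List ℕ → ℕ → α → ℕ → List α
  | [], _, s, _ => [s]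
  | c' :: cs, i, s, c =>
      s :: sgn b cs (i + 1) (o.xor s (o.xor o.one (o.xor (b i c) (b i c')))) c'
def circ (b : ℕ → ℕ → α) : List ℕ → α
  | [] => o.one
  | c :: cs => bal o (sgn o b cs 1 o.zero c)
def mat (r : ℕ) (v : ℕ → α) (i j : ℕ) : α :=
  cond (Nat.ble j (i + 1) || Nat.beq i r) o.zero (v ((r - 1) * (j - i - 2) + (i - 1)))
def bmat (r : ℕ) (v u : ℕ → α) (i j : ℕ) : α :=
  o.xor (mat o r v i j) (cond (Nat.ble j 1) o.zero (u (j - 2)))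
def allc (b : ℕ → ℕ → α) : List (List ℕ) → α
  | [] => o.one
  | c :: cs => o.and (circ o b c) (allc b cs)
end

def combos : List ℕ → ℕ → List (List ℕ)
  | _, 0 => [[]]
  | [], _ + 1 => []
  | x :: xs, k + 1 => (combos xs k).map (x :: ·) ++ combos xs (k + 1)

def var : ℕ → ℕ → ℕ
  | 0, _ => 0
  | n + 1, k => cond (Nat.beq k n) (Nat.shiftLeft (2 ^ (2 ^ n) - 1) (2 ^ n))
      (Nat.lor (var n k) (Nat.shiftLeft (var n k) (2 ^ n)))

def tv (w m h k : ℕ) : ℕ :=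
  cond (Nat.blt k w) (var (w + m) k) (cond (Nat.testBit h (k - w)) (2 ^ (2 ^ (w + m)) - 1) 0)
def tu (w m k : ℕ) : ℕ := cond (Nat.blt k m) (var (w + m) (w + k)) 0

def table (r w m h : ℕ) (cs : List (List ℕ)) : ℕ :=
  allc (natOps (2 ^ (w + m))) (bmat (natOps (2 ^ (w + m))) r (tv w m h) (tu w m)) cs

/-- bit-sliced addition -/
def badd : List ℕ → List ℕ → ℕ → List ℕ
  | x :: xs, y :: ys, c =>
      Nat.xor (Nat.xor x y) c ::
        badd xs ys (Nat.lor (Nat.land x y) (Nat.land c (Nat.xor x y)))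
  | _, _, c => [c]

def bfold (w : ℕ) : ℕ → List ℕ → List ℕ
  | 0, ss => ss
  | m + 1, ss => bfold w m
      (badd (ss.map fun x => x % 2 ^ (2 ^ (w + m))) (ss.map fun x => x / 2 ^ (2 ^ (w + m))) 0)

def le11 : List ℕ → Bool
  | _ :: _ :: s2 :: s3 :: rest => Nat.beq (Nat.land s2 s3) 0 && rest.all fun x => Nat.beq x 0
  | _ => false
def le1 : List ℕ → Bool
  | _ :: rest => rest.all fun x => Nat.beq x 0
  | _ => false

def circs11 : List (List ℕ) := combos [1, 2, 3, 4, 5, 6, 7, 8, 9, 10, 11] 9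
def circs9 : List (List ℕ) := combos [1, 2, 3, 4, 5, 6, 7, 8, 9] 8

def check7 : Bool := le1 (bfold 6 8 [table 7 6 8 0 circs9])
def check8 (h : ℕ) : Bool := le11 (bfold 10 10 [table 8 10 10 h circs11])

/-! ### Correctness of the bit-parallel engine -/

theorem hom_bal {α β : Type} (o : Ops α) (o' : Ops β) (φ : α → β)
    (hx : ∀ a b, φ (o.xor a b) = o'.xor (φ a) (φ b))
    (ha : ∀ a b, φ (o.and a b) = o'.and (φ a) (φ b))
    (ho : ∀ a b, φ (o.or a b) = o'.or (φ a) (φ b))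
    (h1 : φ o.one = o'.one) (h0 : φ o.zero = o'.zero) (l : List α) :
    φ (bal o l) = bal o' (l.map φ) := by
  unfold bal
  split
  · simp [bal9, two4, maj, x3, hx, ha, ho, h1]
  · simp [bal9, two4, maj, x3, hx, ha, ho, h1, h0]
  · rename_i n1 n2
    rw [h1]
    split
    · rename_i heq
      exfalso
      rcases l with _ | ⟨_, _ | ⟨_, _ | ⟨_, _ | ⟨_, _ | ⟨_, _ | ⟨_, _ | ⟨_, _ | ⟨_, _ | ⟨_, _ | ⟨_, _⟩⟩⟩⟩⟩⟩⟩⟩⟩⟩ <;>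
        simp at heq
      exact n1 _ _ _ _ _ _ _ _ _ rfl
    · rename_i heq
      exfalso
      rcases l with _ | ⟨_, _ | ⟨_, _ | ⟨_, _ | ⟨_, _ | ⟨_, _ | ⟨_, _ | ⟨_, _ | ⟨_, _ | ⟨_, _ | ⟨_, _⟩⟩⟩⟩⟩⟩⟩⟩⟩⟩ <;>
        simp at heq
      exact n2 _ _ _ _ _ _ _ _ rfl
    · rfl

theorem hom_sgn {α β : Type} (o : Ops α) (o' : Ops β) (φ : α → β)
    (hx : ∀ a b, φ (o.xor a b) = o'.xor (φ a) (φ b))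
    (h1 : φ o.one = o'.one) (b : ℕ → ℕ → α) (cs : List ℕ) :
    ∀ i s c, (sgn o b cs i s c).map φ = sgn o' (fun i j => φ (b i j)) cs i (φ s) c := by
  induction cs with
  | nil => intro i s c; simp [sgn]
  | cons d cs ih => intro i s c; simp [sgn, ih, hx, h1]

theorem hom_allc {α β : Type} (o : Ops α) (o' : Ops β) (φ : α → β)
    (hx : ∀ a b, φ (o.xor a b) = o'.xor (φ a) (φ b))
    (ha : ∀ a b, φ (o.and a b) = o'.and (φ a) (φ b))
    (ho : ∀ a b, φ (o.or a b) = o'.or (φ a) (φ b))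
    (h1 : φ o.one = o'.one) (h0 : φ o.zero = o'.zero) (b : ℕ → ℕ → α) (cs : List (List ℕ)) :
    φ (allc o b cs) = allc o' (fun i j => φ (b i j)) cs := by
  induction cs with
  | nil => simp [allc, h1]
  | cons d cs ih =>
    simp only [allc, ha, ih]
    congr 1
    cases d with
    | nil => simp [circ, h1]
    | cons c d => simp only [circ]; rw [hom_bal o o' φ hx ha ho h1 h0, hom_sgn o o' φ hx h1, h0]

theorem hom_bmat {α β : Type} (o : Ops α) (o' : Ops β) (φ : α → β)
    (hx : ∀ a b, φ (o.xor a b) = o'.xor (φ a) (φ b)) (h0 : φ o.zero = o'.zero)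
    (r : ℕ) (v u : ℕ → α) (i j : ℕ) :
    φ (bmat o r v u i j) = bmat o' r (fun k => φ (v k)) (fun k => φ (u k)) i j := by
  unfold bmat mat
  rw [hx]
  congr 1
  · cases (Nat.ble j (i + 1) || Nat.beq i r) <;> simp [h0]
  · cases (Nat.ble j 1) <;> simp [h0]

theorem testBit_ones (N p : ℕ) (h : p < N) : (2 ^ N - 1).testBit p = true := by
  rw [Nat.testBit_two_pow_sub_one]; simpa using h

theorem testBit_var (n : ℕ) : ∀ k p, k < n → p < 2 ^ n → (var n k).testBit p = p.testBit k := by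
  induction n with
  | zero => intro k p hk; omega
  | succ n ih =>
    intro k p hk hp
    have hv : ∀ k, var n k < 2 ^ (2 ^ n) := by
      clear ih hk hp
      induction n with
      | zero => intro k; simp [var]
      | succ n ih =>
        intro k
        have e : 2 ^ (n + 1) = 2 ^ n + 2 ^ n := by ring
        unfold var
        cases hb : Nat.beq k n
        · simp only [cond_false]
          have h1 : Nat.shiftLeft (var n k) (2 ^ n) < 2 ^ 2 ^ (n + 1) := by
            show (var n k) <<< (2 ^ n) < _
            rw [Nat.shiftLeft_eq, e, pow_add]
            exact Nat.mul_lt_mul_of_pos_right (ih k) (by positivity)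
          exact Nat.or_lt_two_pow (lt_of_lt_of_le (ih k)
            (Nat.pow_le_pow_right (by norm_num) (by rw [e]; exact Nat.le_add_left _ _))) h1
        · simp only [cond_true]
          show (2 ^ 2 ^ n - 1) <<< (2 ^ n) < _
          rw [Nat.shiftLeft_eq, e, pow_add]
          exact Nat.mul_lt_mul_of_pos_right (Nat.sub_lt (by positivity) one_pos) (by positivity)
    have e : 2 ^ (n + 1) = 2 ^ n + 2 ^ n := by ring
    unfold var
    cases hb : Nat.beq k n
    · have hkn : k ≠ n := fun h => by rw [h, Nat.beq_refl] at hb; cases hb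
      have hkn' : k < n := by omega
      simp only [cond_false]
      show (var n k ||| (var n k) <<< (2 ^ n)).testBit p = _
      rw [Nat.testBit_or, Nat.testBit_shiftLeft]
      by_cases hpn : p < 2 ^ n
      · rw [ih k p hkn' hpn]
        simp [show ¬ (2 ^ n ≤ p) by omega]
      · have h2 : (var n k).testBit p = false :=
          Nat.testBit_lt_two_pow (lt_of_lt_of_le (hv k)
            (Nat.pow_le_pow_right (by norm_num) (by omega)))
        rw [h2, ih k (p - 2 ^ n) hkn' (by omega)]
        obtain ⟨q, rfl⟩ : ∃ q, p = 2 ^ n + q := ⟨p - 2 ^ n, by omega⟩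
        simp [Nat.testBit_two_pow_add_gt hkn']
    · have hkn : k = n := Nat.eq_of_beq_eq_true hb
      subst hkn
      simp only [cond_true]
      show ((2 ^ 2 ^ k - 1) <<< (2 ^ k)).testBit p = _
      rw [Nat.testBit_shiftLeft, Nat.testBit_two_pow_sub_one]
      by_cases hpn : p < 2 ^ k
      · simp [Nat.testBit_lt_two_pow hpn]; omega
      · obtain ⟨q, rfl⟩ : ∃ q, p = 2 ^ k + q := ⟨p - 2 ^ k, by omega⟩
        have hq : q < 2 ^ k := by omega
        rw [Nat.testBit_two_pow_add_eq, Nat.testBit_lt_two_pow hq]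
        simpa using hq

theorem testBit_table (r w m h : ℕ) (cs : List (List ℕ)) (a e : ℕ) (ha : a < 2 ^ w)
    (he : e < 2 ^ m) :
    (table r w m h cs).testBit (2 ^ w * e + a) =
      allc boolOps (bmat boolOps r (2 ^ w * h + a).testBit e.testBit) cs := by
  have hp : 2 ^ w * e + a < 2 ^ (w + m) := by
    rw [pow_add]
    calc 2 ^ w * e + a < 2 ^ w * (e + 1) := by rw [mul_add]; omega
      _ ≤ _ := Nat.mul_le_mul_left _ he
  set p := 2 ^ w * e + a with hpd
  have hx : ∀ a b, Nat.testBit ((natOps (2 ^ (w + m))).xor a b) p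
      = boolOps.xor (a.testBit p) (b.testBit p) := fun a b => Nat.testBit_xor a b p
  have h0 : Nat.testBit (natOps (2 ^ (w + m))).zero p = boolOps.zero := Nat.zero_testBit p
  unfold table
  rw [hom_allc (natOps (2 ^ (w + m))) boolOps (fun x => x.testBit p) hx
    (fun a b => Nat.testBit_and a b p) (fun a b => Nat.testBit_or a b p)
    (testBit_ones _ _ hp) h0]
  congr 1
  funext i j
  rw [hom_bmat (natOps (2 ^ (w + m))) boolOps (fun x => x.testBit p) hx h0]
  congr 1
  · funext k
    unfold tv
    rw [Nat.testBit_two_pow_mul_add _ ha]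
    by_cases hk : k < w
    · have : Nat.blt k w = true := by simpa [Nat.blt_eq] using hk
      rw [this, cond_true, testBit_var _ _ _ (by omega) hp, hpd, Nat.testBit_two_pow_mul_add _ ha, if_pos hk,
        if_pos hk]
    · have : Nat.blt k w = false := by
        rw [← Bool.not_eq_true, Nat.blt_eq]; exact hk
      rw [this, cond_false, if_neg hk]
      cases h.testBit (k - w)
      · simp
      · exact testBit_ones _ _ hp
  · funext k
    unfold tu
    by_cases hk : k < m
    · have : Nat.blt k m = true := by simpa [Nat.blt_eq] using hk
      rw [this, cond_true, testBit_var _ _ _ (by omega) hp, hpd, Nat.testBit_two_pow_mul_add _ ha]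
      simp
    · have : Nat.blt k m = false := by
        rw [← Bool.not_eq_true, Nat.blt_eq]; exact hk
      rw [this, cond_false, Nat.zero_testBit, Nat.testBit_lt_two_pow]
      exact lt_of_lt_of_le he (Nat.pow_le_pow_right (by norm_num) (by omega))

/-- value of bit-sliced numbers at position `p` -/
def bval (p : ℕ) : List ℕ → ℕ
  | [] => 0
  | x :: xs => (x.testBit p).toNat + 2 * bval p xs

theorem bval_badd (p : ℕ) (xs : List ℕ) : ∀ ys c, xs.length = ys.length →
    bval p (badd xs ys c) = bval p xs + bval p ys + (c.testBit p).toNat := by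
  induction xs with
  | nil => intro ys c h; cases ys <;> simp_all [badd, bval]
  | cons x xs ih =>
    intro ys c h
    cases ys with
    | nil => simp at h
    | cons y ys =>
      have h' : xs.length = ys.length := by simpa using h
      simp only [badd, bval]
      rw [ih _ _ h']
      have e1 : (Nat.xor (Nat.xor x y) c).testBit p = ((x.testBit p ^^ y.testBit p) ^^ c.testBit p) := by
        show ((x ^^^ y) ^^^ c).testBit p = _
        simp
      have e2 : (Nat.lor (Nat.land x y) (Nat.land c (Nat.xor x y))).testBit p =
          ((x.testBit p && y.testBit p) || (c.testBit p && (x.testBit p ^^ y.testBit p))) := by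
        show ((x &&& y) ||| (c &&& (x ^^^ y))).testBit p = _
        simp
      rw [e1, e2]
      cases x.testBit p <;> cases y.testBit p <;> cases c.testBit p <;> simp <;> ring

theorem bval_bfold (w m : ℕ) : ∀ ss a, a < 2 ^ w →
    bval a (bfold w m ss) = ∑ e ∈ Finset.range (2 ^ m), bval (2 ^ w * e + a) ss := by
  induction m with
  | zero => intro ss a ha; simp [bfold]
  | succ m ih =>
    intro ss a ha
    unfold bfold
    rw [ih _ _ ha, pow_succ, mul_two, Finset.sum_range_add, ← Finset.sum_add_distrib]
    refine Finset.sum_congr rfl fun e he => ?_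
    have he' : e < 2 ^ m := Finset.mem_range.1 he
    rw [bval_badd _ _ _ _ (by simp)]
    have hp : 2 ^ w * e + a < 2 ^ (w + m) := by
      rw [pow_add]
      calc 2 ^ w * e + a < 2 ^ w * (e + 1) := by rw [mul_add]; omega
        _ ≤ _ := Nat.mul_le_mul_left _ he'
    have e1 : 2 ^ w * (2 ^ m + e) + a = (2 ^ w * e + a) + 2 ^ (w + m) := by
      rw [pow_add]; ring
    rw [e1]
    generalize 2 ^ w * e + a = p at *
    have A1 : ∀ l : List ℕ, bval p (l.map fun x => x % 2 ^ (2 ^ (w + m))) = bval p l := by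
      intro l
      induction l with
      | nil => rfl
      | cons x l ih => simp [bval, ih, Nat.testBit_mod_two_pow, hp]
    have A2 : ∀ l : List ℕ, bval p (l.map fun x => x / 2 ^ (2 ^ (w + m))) =
        bval (p + 2 ^ (w + m)) l := by
      intro l
      induction l with
      | nil => rfl
      | cons x l ih =>
        simp only [List.map_cons, bval, ih, Nat.testBit_div_two_pow]
    rw [A1, A2]
    simp

theorem bval_zero (p : ℕ) (l : List ℕ) (h : (l.all fun x => Nat.beq x 0) = true) :
    bval p l = 0 := by
  induction l with
  | nil => rfl
  | cons x l ih =>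
    simp only [List.all_cons, Bool.and_eq_true] at h
    have hx : x = 0 := Nat.eq_of_beq_eq_true h.1
    simp [bval, ih h.2, hx]

theorem bval_le11 (p : ℕ) (l : List ℕ) (h : le11 l = true) : bval p l ≤ 11 := by
  unfold le11 at h
  split at h
  · rename_i s0 s1 s2 s3 rest
    simp only [Bool.and_eq_true] at h
    have h1 : Nat.land s2 s3 = 0 := Nat.eq_of_beq_eq_true h.1
    have h2 : (s2.testBit p && s3.testBit p) = false := by
      rw [← Nat.testBit_and]
      show (Nat.land s2 s3).testBit p = false
      rw [h1]; simp
    simp only [bval, bval_zero p rest h.2]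
    revert h2
    cases s0.testBit p <;> cases s1.testBit p <;> cases s2.testBit p <;> cases s3.testBit p <;> simp
  · cases h

theorem bval_le1 (p : ℕ) (l : List ℕ) (h : le1 l = true) : bval p l ≤ 1 := by
  unfold le1 at h
  split at h
  · rename_i s0 rest
    simp only [bval, bval_zero p rest h]
    cases s0.testBit p <;> simp
  · cases h

/-- `Q r a e cs`: normalised matrix with bits `a`, reorientation with bits `e`, satisfies all
circuit conditions. -/
def Q (r : ℕ) (cs : List (List ℕ)) (a e : ℕ) : Bool :=
  allc boolOps (bmat boolOps r a.testBit e.testBit) cs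

theorem card_Q (r w m h : ℕ) (cs : List (List ℕ)) (a : ℕ) (ha : a < 2 ^ w) :
    ((Finset.range (2 ^ m)).filter (fun e => Q r cs (2 ^ w * h + a) e = true)).card =
      bval a (bfold w m [table r w m h cs]) := by
  rw [bval_bfold w m _ a ha, Finset.card_filter]
  refine Finset.sum_congr rfl fun e he => ?_
  simp only [bval, testBit_table r w m h cs a e ha (Finset.mem_range.1 he), Q]
  by_cases hq : allc boolOps (bmat boolOps r (2 ^ w * h + a).testBit e.testBit) cs = true
  · simp [hq]
  · simp [hq]

theorem c7 : check7 = true := by decide +kernel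
theorem c8_0 : check8 0 = true := by decide +kernel
theorem c8_1 : check8 1 = true := by decide +kernel
theorem c8_2 : check8 2 = true := by decide +kernel
theorem c8_3 : check8 3 = true := by decide +kernel
theorem c8_4 : check8 4 = true := by decide +kernel
theorem c8_5 : check8 5 = true := by decide +kernel
theorem c8_6 : check8 6 = true := by decide +kernel
theorem c8_7 : check8 7 = true := by decide +kernel
theorem c8_8 : check8 8 = true := by decide +kernel
theorem c8_9 : check8 9 = true := by decide +kernel
theorem c8_10 : check8 10 = true := by decide +kernel
theorem c8_11 : check8 11 = true := by decide +kernel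
theorem c8_12 : check8 12 = true := by decide +kernel
theorem c8_13 : check8 13 = true := by decide +kernel
theorem c8_14 : check8 14 = true := by decide +kernel
theorem c8_15 : check8 15 = true := by decide +kernel

theorem c8 (h : ℕ) (hh : h < 16) : check8 h = true := by
  interval_cases h
  exacts [c8_0, c8_1, c8_2, c8_3, c8_4, c8_5, c8_6, c8_7, c8_8, c8_9, c8_10, c8_11, c8_12,
    c8_13, c8_14, c8_15]

theorem card8 (a : ℕ) (ha : a < 2 ^ 14) :
    ((Finset.range (2 ^ 10)).filter (fun e => Q 8 circs11 a e = true)).card ≤ 11 := by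
  have h1 : a = 2 ^ 10 * (a / 2 ^ 10) + a % 2 ^ 10 := (Nat.div_add_mod _ _).symm
  have h2 : a / 2 ^ 10 < 16 := by omega
  have h3 : a % 2 ^ 10 < 2 ^ 10 := Nat.mod_lt _ (by norm_num)
  rw [h1, card_Q 8 10 10 _ circs11 _ h3]
  exact bval_le11 _ _ (c8 _ h2)

theorem card7 (a : ℕ) (ha : a < 2 ^ 6) :
    ((Finset.range (2 ^ 8)).filter (fun e => Q 7 circs9 a e = true)).card ≤ 1 := by
  have h := card_Q 7 6 8 0 circs9 a ha
  rw [Nat.mul_zero, Nat.zero_add] at h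
  rw [h]
  exact bval_le1 _ _ c7

/-! ### Gauge fixing -/

def win (D r : ℕ) : List ℕ → ℕ → ℕ → Prop
  | [], _, _ => True
  | c' :: cs, i, c => (1 ≤ i ∧ i ≤ r ∧ i ≤ c ∧ c ≤ i + D ∧ i ≤ c' ∧ c' ≤ i + D) ∧ win D r cs (i + 1) c'

instance decWin (D r : ℕ) : (cs : List ℕ) → (i c : ℕ) → Decidable (win D r cs i c)
  | [], _, _ => isTrue trivial
  | c' :: cs, i, c => by
      have := decWin D r cs (i + 1) c'
      unfold win
      infer_instance

def winL (D r : ℕ) : List ℕ → Prop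
  | [] => True
  | c :: cs => win D r cs 1 c

instance decWinL (D r : ℕ) : (cs : List ℕ) → Decidable (winL D r cs)
  | [] => isTrue trivial
  | c :: cs => decWin D r cs 1 c

theorem sgn_congr (D r : ℕ) (b b' : ℕ → ℕ → Bool) (ρ : ℕ → Bool)
    (hb : ∀ i j, 1 ≤ i → i ≤ r → i ≤ j → j ≤ i + D → b i j = (b' i j ^^ ρ i)) (cs : List ℕ) :
    ∀ i s c, win D r cs i c → sgn boolOps b cs i s c = sgn boolOps b' cs i s c := by
  induction cs with
  | nil => intro i s c _; rfl
  | cons d cs ih =>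
    intro i s c h
    obtain ⟨⟨h1, h2, h3, h4, h5, h6⟩, h7⟩ := h
    simp only [sgn]
    rw [ih _ _ _ h7, hb i c h1 h2 h3 h4, hb i d h1 h2 h5 h6]
    congr 2
    simp only [boolOps]
    cases b' i c <;> cases b' i d <;> cases ρ i <;> rfl

theorem allc_congr (D r : ℕ) (b b' : ℕ → ℕ → Bool) (ρ : ℕ → Bool)
    (hb : ∀ i j, 1 ≤ i → i ≤ r → i ≤ j → j ≤ i + D → b i j = (b' i j ^^ ρ i))
    (L : List (List ℕ)) (hL : ∀ c ∈ L, winL D r c) :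
    allc boolOps b L = allc boolOps b' L := by
  induction L with
  | nil => rfl
  | cons c L ih =>
    simp only [allc]
    rw [ih fun c hc => hL c (List.mem_cons_of_mem _ hc)]
    congr 1
    have h := hL c List.mem_cons_self
    cases c with
    | nil => rfl
    | cons c cs =>
      simp only [circ]
      rw [sgn_congr D r b b' ρ hb cs _ _ _ h]

def gG (M : ℕ → ℕ → Bool) : ℕ → Bool
  | 0 => false
  | i + 1 => M (i + 1) (i + 2) ^^ M (i + 1) (i + 1) ^^ gG M i

def gρ (M : ℕ → ℕ → Bool) (i : ℕ) : Bool := M i i ^^ gG M (i - 1)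
def gg (M : ℕ → ℕ → Bool) (r j : ℕ) : Bool :=
  if j ≤ r + 1 then gG M (j - 1) else M r j ^^ gρ M r
def gN (M : ℕ → ℕ → Bool) (r i j : ℕ) : Bool := M i j ^^ gρ M i ^^ gg M r j
def ga (M : ℕ → ℕ → Bool) (r L : ℕ) : ℕ :=
  Nat.ofBits (fun k : Fin L =>
    gN M r (k.1 % (r - 1) + 1) (k.1 / (r - 1) + 2 + (k.1 % (r - 1) + 1)))
def ge (M : ℕ → ℕ → Bool) (r m : ℕ) (f : ℕ → Bool) : ℕ :=
  Nat.ofBits (fun k : Fin m => f (k.1 + 2) ^^ gg M r (k.1 + 2) ^^ f 1)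

theorem allc_gauge (M : ℕ → ℕ → Bool) (f : ℕ → Bool) (D r : ℕ) (hr : 2 ≤ r)
    (L : List (List ℕ)) (hL : ∀ c ∈ L, winL D r c) :
    allc boolOps (fun i j => M i j ^^ f j) L =
      Q r L (ga M r ((r - 1) * (D - 1))) (ge M r (r + D - 1) f) := by
  unfold Q
  refine allc_congr D r _ _ (fun i => gρ M i ^^ f 1) ?_ L hL
  intro i j h1 h2 h3 h4
  have e1 : (if j ≤ 1 then false else (ge M r (r + D - 1) f).testBit (j - 2)) =
      (f j ^^ gg M r j ^^ f 1) := by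
    by_cases hj : j ≤ 1
    · obtain rfl : j = 1 := by omega
      simp [gg, gG]
    · rw [if_neg hj]
      unfold ge
      rw [Nat.testBit_ofBits_lt _ _ (by omega)]
      simp only
      rw [show j - 2 + 2 = j by omega]
  have e2 : mat boolOps r (ga M r ((r - 1) * (D - 1))).testBit i j = gN M r i j := by
    unfold mat
    by_cases hj : j ≤ i + 1
    · have : Nat.ble j (i + 1) = true := by rw [Nat.ble_eq]; exact hj
      rw [this]
      simp only [Bool.true_or, cond_true]
      rcases (by omega : j = i ∨ j = i + 1) with rfl | rfl
      · have hh : j ≤ r + 1 := by omega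
        simp only [gN, gg, hh, if_true, gρ, boolOps]
        cases M j j <;> cases gG M (j - 1) <;> rfl
      · have hh : i + 1 ≤ r + 1 := by omega
        obtain ⟨k, rfl⟩ : ∃ k, i = k + 1 := ⟨i - 1, by omega⟩
        simp only [gN, gg, hh, if_true, gρ, boolOps, Nat.add_sub_cancel, gG]
        cases M (k + 1) (k + 1) <;> cases gG M k <;> cases M (k + 1) (k + 2) <;> rfl
    · have : Nat.ble j (i + 1) = false := by
        rw [← Bool.not_eq_true, Nat.ble_eq]; exact hj
      rw [this, Bool.false_or]
      by_cases hir : i = r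
      · have : Nat.beq i r = true := by rw [Nat.beq_eq]; exact hir
        rw [this, cond_true]
        subst hir
        have hh : ¬ j ≤ i + 1 := hj
        simp only [gN, gg, hh, if_false, gρ, boolOps]
        cases M i i <;> cases gG M (i - 1) <;> cases M i j <;> rfl
      · have : Nat.beq i r = false := by
          rw [← Bool.not_eq_true]; intro h; rw [Nat.beq_eq] at h; exact hir h
        rw [this, cond_false]
        unfold ga
        have hlt : (r - 1) * (j - i - 2) + (i - 1) < (r - 1) * (D - 1) :=
          calc (r - 1) * (j - i - 2) + (i - 1) < (r - 1) * (j - i - 2 + 1) := by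
                rw [mul_add]; omega
            _ ≤ _ := Nat.mul_le_mul_left _ (by omega)
        rw [Nat.testBit_ofBits_lt _ _ hlt]
        simp only
        have m1 : ((r - 1) * (j - i - 2) + (i - 1)) % (r - 1) = i - 1 := by
          rw [Nat.mul_add_mod, Nat.mod_eq_of_lt (by omega)]
        have m2 : ((r - 1) * (j - i - 2) + (i - 1)) / (r - 1) = j - i - 2 := by
          rw [Nat.mul_add_div (by omega), Nat.div_eq_of_lt (by omega), Nat.add_zero]
        rw [m1, m2, show i - 1 + 1 = i by omega, show j - i - 2 + 2 + i = j by omega]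
  have e3 : bmat boolOps r (ga M r ((r - 1) * (D - 1))).testBit
      (ge M r (r + D - 1) f).testBit i j = (gN M r i j ^^ (f j ^^ gg M r j ^^ f 1)) := by
    unfold bmat
    rw [e2, ← e1]
    by_cases hj : j ≤ 1
    · have : Nat.ble j 1 = true := by rw [Nat.ble_eq]; exact hj
      simp [this, hj, boolOps]
    · have : Nat.ble j 1 = false := by
        rw [← Bool.not_eq_true, Nat.ble_eq]; exact hj
      simp [this, hj, boolOps]
  rw [e3]
  unfold gN
  cases M i j <;> cases gρ M i <;> cases gg M r j <;> cases f j <;> cases f 1 <;> rfl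

theorem ge_inj (M : ℕ → ℕ → Bool) (r m : ℕ) (f f' : ℕ → Bool) (h : ge M r m f = ge M r m f')
    (j : ℕ) (h1 : 1 ≤ j) (h2 : j ≤ m + 1) : (f j ^^ f 1) = (f' j ^^ f' 1) := by
  by_cases hj : j = 1
  · subst hj; simp
  have h' := congrArg (fun x => x.testBit (j - 2)) h
  simp only [ge] at h'
  rw [Nat.testBit_ofBits_lt _ _ (by omega), Nat.testBit_ofBits_lt _ _ (by omega)] at h'
  simp only [show j - 2 + 2 = j by omega] at h'
  revert h'
  cases f j <;> cases f 1 <;> cases f' j <;> cases f' 1 <;> cases gg M r j <;> simp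

theorem ge_lt (M : ℕ → ℕ → Bool) (r m : ℕ) (f : ℕ → Bool) : ge M r m f < 2 ^ m :=
  Nat.ofBits_lt_two_pow _

theorem win11 : ∀ c ∈ circs11, winL 3 8 c := by decide +kernel
theorem win9 : ∀ c ∈ circs9, winL 2 7 c := by decide +kernel

/-- increasing list of `k` columns in `1..n` -/
def Inc (n k : ℕ) (c : List ℕ) : Prop :=
  c.length = k ∧ c.Pairwise (· < ·) ∧ ∀ j ∈ c, 1 ≤ j ∧ j ≤ n

instance (n k : ℕ) (c : List ℕ) : Decidable (Inc n k c) := by unfold Inc; infer_instance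

theorem inc11 : ∀ c ∈ circs11, Inc 11 9 c := by decide +kernel
theorem inc9 : ∀ c ∈ circs9, Inc 9 8 c := by decide +kernel

theorem allc_true (b : ℕ → ℕ → Bool) (L : List (List ℕ)) :
    allc boolOps b L = true ↔ ∀ c ∈ L, circ boolOps b c = true := by
  induction L with
  | nil => simp [allc, boolOps]
  | cons c L ih =>
    simp only [allc, List.forall_mem_cons, ← ih]
    show ((_ && _) = true) ↔ _
    simp

/-! ### Circuits and neighborliness -/

/-- columns of negative sign -/
def negs (b : ℕ → ℕ → Bool) : List ℕ → ℕ → Bool → ℕ → Finset ℕ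
  | [], _, s, c => if s = true then {c} else ∅
  | c' :: cs, i, s, c => (if s = true then {c} else ∅) ∪
      negs b cs (i + 1) (s ^^ (true ^^ (b i c ^^ b i c'))) c'

theorem negs_sub (b : ℕ → ℕ → Bool) (cs : List ℕ) : ∀ i s c, ∀ x ∈ negs b cs i s c,
    x ∈ c :: cs := by
  induction cs with
  | nil => intro i s c x hx; cases s <;> simp_all [negs]
  | cons d cs ih =>
    intro i s c x hx
    simp only [negs, Finset.mem_union] at hx
    rcases hx with hx | hx
    · cases s <;> simp_all
    · exact List.mem_cons_of_mem _ (ih _ _ _ x hx)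

theorem negs_card (b : ℕ → ℕ → Bool) (cs : List ℕ) : ∀ i s c,
    (negs b cs i s c).card ≤ (sgn boolOps b cs i s c).count true := by
  induction cs with
  | nil => intro i s c; cases s <;> simp [negs, sgn]
  | cons d cs ih =>
    intro i s c
    simp only [negs, sgn]
    refine le_trans (Finset.card_union_le _ _) ?_
    have := ih (i + 1) (s ^^ (true ^^ (b i c ^^ b i d))) d
    rw [List.count_cons]
    have h2 : (if s = true then {c} else (∅ : Finset ℕ)).card ≤ if (s == true) = true then 1 else 0 := by
      cases s <;> simp
    rw [Nat.add_comm]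
    exact Nat.add_le_add this h2

theorem rowChange_le (A : ℕ → ℕ → ℤ) (n i e q : ℕ) (h1 : e < q) (h2 : q ≤ n)
    (h3 : A i q ≠ A i e) : ∃ e', rowChange A n i e = some e' ∧ e' ≤ q := by
  unfold rowChange
  cases h : (List.range (n + 1)).find? fun c' => decide (e < c' ∧ A i c' ≠ A i e) with
  | none =>
    rw [List.find?_eq_none] at h
    exact absurd (by simpa using ⟨h1, h3⟩) (h q (List.mem_range.2 (by omega)))
  | some e' =>
    refine ⟨e', rfl, ?_⟩
    rw [List.find?_range_eq_some] at h
    by_contra hlt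
    have := h.2.2 q (by omega)
    simp [h1, h3] at this

theorem travel_step (B B' : ℕ → ℕ → ℤ) (n r : ℕ) (b : ℕ → ℕ → Bool) (S : Finset ℕ)
    (hB : ∀ i j, 1 ≤ i → i ≤ r → 1 ≤ j → j ≤ n → B i j = if b i j = true then -1 else 1)
    (hB' : B' = reorient B S) (cs : List ℕ) :
    ∀ i s c e, 1 ≤ i → i + cs.length ≤ r + 1 → (c :: cs).Pairwise (· < ·) →
      (∀ j ∈ c :: cs, 1 ≤ j ∧ j ≤ n) → (∀ j ∈ c :: cs, j ∈ S ↔ j ∈ negs b cs i s c) →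
      ttEntry B' n i = some e → e ≤ c → (ttEntry B' n (i + cs.length)).isSome := by
  induction cs with
  | nil => intro i s c e h1 h2 h3 h4 h5 h6 h7; simp [h6]
  | cons d cs ih =>
    intro i s c e h1 h2 h3 h4 h5 h6 h7
    rw [List.length_cons] at h2 ⊢
    have hcd : c < d := by
      rw [List.pairwise_cons] at h3; exact h3.1 d List.mem_cons_self
    have hc := h4 c List.mem_cons_self
    have hd := h4 d (List.mem_cons_of_mem _ List.mem_cons_self)
    have h3' : (d :: cs).Pairwise (· < ·) := by rw [List.pairwise_cons] at h3; exact h3.2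
    set s' : Bool := (s ^^ (true ^^ (b i c ^^ b i d))) with hs'
    have hnot : ∀ t cs' i' d', (∀ j ∈ d' :: cs', c < j) → c ∉ negs b cs' i' t d' := by
      intro t cs' i' d' hh hm
      exact absurd (hh c (negs_sub b cs' i' t d' c hm)) (lt_irrefl c)
    have hcS : c ∈ S ↔ s = true := by
      rw [h5 c List.mem_cons_self]
      simp only [negs, Finset.mem_union]
      have := hnot s' cs (i + 1) d (by
        rw [List.pairwise_cons] at h3; exact h3.1)
      rw [← hs']
      cases s <;> simp [this]
    have h5' : ∀ j ∈ d :: cs, j ∈ S ↔ j ∈ negs b cs (i + 1) s' d := by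
      intro j hj
      rw [h5 j (List.mem_cons_of_mem _ hj)]
      have hcj : c < j := by rw [List.pairwise_cons] at h3; exact h3.1 j hj
      simp only [negs, Finset.mem_union, ← hs']
      have : j ∉ (if s = true then {c} else (∅ : Finset ℕ)) := by
        cases s <;> simp; omega
      simp [this]
    have hdS : d ∈ S ↔ s' = true := by
      rw [h5' d List.mem_cons_self]
      cases cs with
      | nil => cases s' <;> simp [negs]
      | cons d2 cs =>
        simp only [negs, Finset.mem_union]
        have : ∀ t, d ∉ negs b cs (i + 1 + 1) t d2 := by
          intro t hm
          have := negs_sub b cs _ _ _ d hm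
          rw [List.pairwise_cons] at h3'
          exact absurd (h3'.1 d this) (lt_irrefl d)
        cases s' <;> simp [this]
    have hne : B' i c ≠ B' i d := by
      rw [hB']
      unfold reorient
      rw [hB i c h1 (by omega) hc.1 hc.2, hB i d h1 (by omega) hd.1 hd.2]
      simp only [hcS, hdS, hs']
      cases s <;> cases b i c <;> cases b i d <;> simp
    obtain ⟨e', he', hle⟩ : ∃ e', rowChange B' n i e = some e' ∧ e' ≤ d := by
      by_cases hce : B' i c = B' i e
      · exact rowChange_le B' n i e d (by omega) hd.2 (by rw [← hce]; exact hne.symm)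
      · have : e ≠ c := by rintro rfl; exact hce rfl
        obtain ⟨e', h, h'⟩ := rowChange_le B' n i e c (by omega) hc.2 hce
        exact ⟨e', h, by omega⟩
    have hnext : ttEntry B' n (i + 1) = some e' := by
      obtain ⟨k, rfl⟩ : ∃ k, i = k + 1 := ⟨i - 1, by omega⟩
      show (ttEntry B' n (k + 1)).bind (rowChange B' n (k + 1)) = _
      rw [h6]; exact he'
    have := ih (i + 1) s' d e' (by omega) (by omega) h3'
      (fun j hj => h4 j (List.mem_cons_of_mem _ hj)) h5' hnext hle
    rwa [show i + 1 + cs.length = i + (cs.length + 1) by omega] at this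

theorem count_ge (B : ℕ → ℕ → ℤ) (b : ℕ → ℕ → Bool)
    (hB : ∀ i j, 1 ≤ i → i ≤ 8 → 1 ≤ j → j ≤ 12 → B i j = if b i j = true then -1 else 1)
    (hN : IsNeighborly B 8 12 3) (c : ℕ) (cs : List ℕ) (hc : Inc 12 9 (c :: cs)) (s : Bool) :
    4 ≤ (sgn boolOps b cs 1 s c).count true := by
  by_contra hlt
  obtain ⟨h1, h2, h3⟩ := hc
  have hlen : cs.length = 8 := by simpa using h1
  refine hN (negs b cs 1 s c) ?_ ?_ ?_
  · intro x hx
    have := h3 x (negs_sub b cs 1 s c x hx)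
    exact Finset.mem_Icc.2 this
  · have := negs_card b cs 1 s c
    omega
  · unfold ttPositive
    have := travel_step B _ 12 8 b (negs b cs 1 s c) hB rfl cs 1 s c 1 le_rfl (by omega) h2 h3
      (fun j _ => Iff.rfl) rfl (h3 c List.mem_cons_self).1
    rwa [hlen] at this

theorem sgn_not (b : ℕ → ℕ → Bool) (cs : List ℕ) : ∀ i s c,
    sgn boolOps b cs i (!s) c = (sgn boolOps b cs i s c).map not := by
  induction cs with
  | nil => intro i s c; rfl
  | cons d cs ih =>
    intro i s c
    simp only [sgn, List.map_cons, ← ih]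
    congr 2
    simp only [boolOps]
    cases s <;> cases b i c <;> cases b i d <;> rfl

theorem sgn_length (b : ℕ → ℕ → Bool) (cs : List ℕ) : ∀ i s c,
    (sgn boolOps b cs i s c).length = cs.length + 1 := by
  induction cs with
  | nil => intro i s c; rfl
  | cons d cs ih => intro i s c; simp [sgn, ih]

theorem bal9_spec : ∀ a b c d e f g h i : Bool,
    4 ≤ [a, b, c, d, e, f, g, h, i].count true →
    4 ≤ ([a, b, c, d, e, f, g, h, i].map not).count true →
    bal9 boolOps a b c d e f g h i = true := by decide +kernel

theorem list9 (l : List Bool) (h : l.length = 9) :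
    ∃ a b c d e f g h i, l = [a, b, c, d, e, f, g, h, i] := by
  rcases l with _ | ⟨a, _ | ⟨b, _ | ⟨c, _ | ⟨d, _ | ⟨e, _ | ⟨f, _ | ⟨g, _ | ⟨h, _ | ⟨i, _ | ⟨_, _⟩⟩⟩⟩⟩⟩⟩⟩⟩⟩ <;>
    simp at h
  exact ⟨a, b, c, d, e, f, g, _, i, rfl⟩

theorem list8 (l : List Bool) (h : l.length = 8) :
    ∃ a b c d e f g h, l = [a, b, c, d, e, f, g, h] := by
  rcases l with _ | ⟨a, _ | ⟨b, _ | ⟨c, _ | ⟨d, _ | ⟨e, _ | ⟨f, _ | ⟨g, _ | ⟨h, _ | ⟨i, _⟩⟩⟩⟩⟩⟩⟩⟩⟩ <;>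
    simp at h
  exact ⟨a, b, c, d, e, f, g, _, rfl⟩

theorem circ_true (B : ℕ → ℕ → ℤ) (b : ℕ → ℕ → Bool)
    (hB : ∀ i j, 1 ≤ i → i ≤ 8 → 1 ≤ j → j ≤ 12 → B i j = if b i j = true then -1 else 1)
    (hN : IsNeighborly B 8 12 3) (c : List ℕ) (hc : Inc 12 9 c) :
    circ boolOps b c = true := by
  cases c with
  | nil => rfl
  | cons c cs =>
    have h1 := count_ge B b hB hN c cs hc false
    have h2 := count_ge B b hB hN c cs hc (!false)
    rw [sgn_not] at h2
    obtain ⟨a1, a2, a3, a4, a5, a6, a7, a8, a9, hl⟩ := list9 (sgn boolOps b cs 1 false c) (by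
      rw [sgn_length]; simpa using hc.1)
    rw [hl] at h1 h2
    show bal boolOps (sgn boolOps b cs 1 false c) = true
    rw [hl]
    exact bal9_spec _ _ _ _ _ _ _ _ _ h1 h2

/-! ### Assembling -/

theorem sgn_eq (b b' : ℕ → ℕ → Bool) (k : Bool) (cs : List ℕ) : ∀ i s c,
    (∀ i, ∀ j ∈ c :: cs, b i j = (b' i j ^^ k)) →
    sgn boolOps b cs i s c = sgn boolOps b' cs i s c := by
  induction cs with
  | nil => intro i s c _; rfl
  | cons d cs ih =>
    intro i s c h
    simp only [sgn]
    rw [ih _ _ _ fun i j hj => h i j (List.mem_cons_of_mem _ hj), h i c List.mem_cons_self,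
      h i d (List.mem_cons_of_mem _ List.mem_cons_self)]
    congr 2
    simp only [boolOps]
    cases b' i c <;> cases b' i d <;> cases k <;> rfl

theorem circ_eq (b b' : ℕ → ℕ → Bool) (k : Bool) (c : List ℕ)
    (h : ∀ i, ∀ j ∈ c, b i j = (b' i j ^^ k)) : circ boolOps b c = circ boolOps b' c := by
  cases c with
  | nil => rfl
  | cons c cs => simp only [circ]; rw [sgn_eq b b' k cs _ _ _ h]

theorem sgn_append (b b' : ℕ → ℕ → Bool) (d : ℕ) (hd : ∀ i, b' i d = !b i d) (cs : List ℕ) :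
    ∀ i s c, (∀ i, ∀ j ∈ c :: cs, b' i j = b i j) →
    ∃ t, sgn boolOps b (cs ++ [d]) i s c = sgn boolOps b cs i s c ++ [t] ∧
      sgn boolOps b' (cs ++ [d]) i s c = sgn boolOps b cs i s c ++ [!t] := by
  induction cs with
  | nil =>
    intro i s c h
    refine ⟨(s ^^ (true ^^ (b i c ^^ b i d))), rfl, ?_⟩
    simp only [sgn, List.nil_append, hd, h i c List.mem_cons_self, boolOps, List.cons_append]
    cases s <;> cases b i c <;> cases b i d <;> rfl
  | cons x cs ih =>
    intro i s c h
    obtain ⟨t, h1, h2⟩ := ih (i + 1) (s ^^ (true ^^ (b i c ^^ b i x))) x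
      fun i j hj => h i j (List.mem_cons_of_mem _ hj)
    refine ⟨t, ?_, ?_⟩
    · simp only [sgn, List.cons_append]
      exact congrArg (s :: ·) h1
    · simp only [sgn, List.cons_append]
      rw [h i c List.mem_cons_self, h i x (List.mem_cons_of_mem _ List.mem_cons_self)]
      exact congrArg (s :: ·) h2

theorem circ_double (b b' : ℕ → ℕ → Bool) (d : ℕ) (hd : ∀ i, b' i d = !b i d) (c : List ℕ)
    (hlen : c.length = 8) (h : ∀ i, ∀ j ∈ c, b' i j = b i j)
    (h1 : circ boolOps b (c ++ [d]) = true) (h2 : circ boolOps b' (c ++ [d]) = true) :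
    circ boolOps b c = true := by
  cases c with
  | nil => rfl
  | cons c cs =>
    obtain ⟨t, e1, e2⟩ := sgn_append b b' d hd cs 1 false c h
    obtain ⟨a1, a2, a3, a4, a5, a6, a7, a8, hl⟩ := list8 (sgn boolOps b cs 1 false c) (by
      rw [sgn_length]; simpa using hlen)
    replace h1 : bal boolOps (sgn boolOps b (cs ++ [d]) 1 false c) = true := h1
    replace h2 : bal boolOps (sgn boolOps b' (cs ++ [d]) 1 false c) = true := h2
    rw [e1, hl] at h1
    rw [e2, hl] at h2
    show bal boolOps (sgn boolOps b cs 1 false c) = true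
    rw [hl]
    replace h1 : bal9 boolOps a1 a2 a3 a4 a5 a6 a7 a8 t = true := h1
    replace h2 : bal9 boolOps a1 a2 a3 a4 a5 a6 a7 a8 (!t) = true := h2
    show (bal9 boolOps a1 a2 a3 a4 a5 a6 a7 a8 false &&
      bal9 boolOps a1 a2 a3 a4 a5 a6 a7 a8 true) = true
    cases t
    · rw [h1]; exact h2
    · rw [h1, Bool.and_true]; exact h2

theorem sgn_shift (b : ℕ → ℕ → Bool) (t : ℕ) (cs : List ℕ) : ∀ i s c,
    sgn boolOps (fun i j => b i (j + t)) cs i s c =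
      sgn boolOps b (cs.map (· + t)) i s (c + t) := by
  induction cs with
  | nil => intro i s c; rfl
  | cons d cs ih => intro i s c; simp only [sgn, List.map_cons, ih]

theorem circ_shift (b : ℕ → ℕ → Bool) (t : ℕ) (c : List ℕ) :
    circ boolOps (fun i j => b i (j + t)) c = circ boolOps b (c.map (· + t)) := by
  cases c with
  | nil => rfl
  | cons c cs => simp only [circ, List.map_cons, sgn_shift]

/-- all circuit conditions for `M` reoriented along `K` -/
def Good (M : ℕ → ℕ → Bool) (f : ℕ → Bool) : Prop :=
  ∀ c, Inc 12 9 c → circ boolOps (fun i j => M i j ^^ f j) c = true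

def chi (K : Finset ℕ) (j : ℕ) : Bool := decide (j ∈ K)

theorem card11 (M : ℕ → ℕ → Bool) (W : Finset (Finset ℕ)) (hW : ∀ K ∈ W, K ⊆ Finset.Icc 2 11)
    (hg : ∀ K ∈ W, ∀ c, Inc 11 9 c → circ boolOps (fun i j => M i j ^^ chi K j) c = true) :
    W.card ≤ 11 := by
  refine le_trans (Finset.card_le_card_of_injOn (fun K => ge M 8 10 (chi K)) ?_ ?_)
    (card8 (ga M 8 14) (Nat.ofBits_lt_two_pow _))
  · intro K hK
    have hK' : K ∈ W := hK
    simp only [Finset.coe_filter, Set.mem_ofPred_eq, Finset.mem_range]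
    refine ⟨ge_lt _ _ _ _, ?_⟩
    have h := allc_gauge M (chi K) 3 8 (by norm_num) circs11 win11
    rw [← h, allc_true]
    intro c hc
    exact hg K hK' c (inc11 c hc)
  · intro K hK K' hK' he
    have hK1 : K ∈ W := hK
    have hK1' : K' ∈ W := hK'
    have key := ge_inj M 8 10 (chi K) (chi K') he
    have n1 : chi K 1 = false := by
      simp only [chi, decide_eq_false_iff_not]; intro h
      have := Finset.mem_Icc.1 (hW K hK1 h); omega
    have n1' : chi K' 1 = false := by
      simp only [chi, decide_eq_false_iff_not]; intro h
      have := Finset.mem_Icc.1 (hW K' hK1' h); omega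
    simp only [n1, n1', Bool.xor_false] at key
    ext j
    constructor
    · intro hj
      have := Finset.mem_Icc.1 (hW K hK1 hj)
      have := key j (by omega) (by omega)
      simpa [chi, hj] using this.symm
    · intro hj
      have := Finset.mem_Icc.1 (hW K' hK1' hj)
      have := key j (by omega) (by omega)
      simpa [chi, hj] using this

theorem double_unique (M : ℕ → ℕ → Bool) (f f' : ℕ → Bool)
    (hf : ∀ c, Inc 11 8 c → circ boolOps (fun i j => M i j ^^ f j) c = true)
    (hf' : ∀ c, Inc 11 8 c → circ boolOps (fun i j => M i j ^^ f' j) c = true)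
    (h1 : f 1 = f' 1) : ∀ j, 1 ≤ j → j ≤ 11 → f j = f' j := by
  have main : ∀ t, t ≤ 2 → ∀ j, 1 ≤ j → j ≤ 9 →
      (f (j + t) ^^ f (1 + t)) = (f' (j + t) ^^ f' (1 + t)) := by
    intro t ht j hj1 hj2
    have mem : ∀ f : ℕ → Bool,
        (∀ c, Inc 11 8 c → circ boolOps (fun i j => M i j ^^ f j) c = true) →
        ge (fun i j => M i (j + t)) 7 8 (fun j => f (j + t)) ∈
          (Finset.range (2 ^ 8)).filter
            (fun e => Q 7 circs9 (ga (fun i j => M i (j + t)) 7 6) e = true) := by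
      intro f hf
      rw [Finset.mem_filter, Finset.mem_range]
      refine ⟨ge_lt _ _ _ _, ?_⟩
      have h := allc_gauge (fun i j => M i (j + t)) (fun j => f (j + t)) 2 7 (by norm_num)
        circs9 win9
      rw [← h, allc_true]
      intro c hc
      obtain ⟨i1, i2, i3⟩ := inc9 c hc
      rw [circ_shift (fun i j => M i j ^^ f j) t c]
      refine hf _ ⟨by simpa using i1, ?_, ?_⟩
      · rw [List.pairwise_map]
        exact i2.imp (by intro a b h; omega)
      · intro j hj
        obtain ⟨x, hx, rfl⟩ := List.mem_map.1 hj
        have := i3 x hx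
        constructor <;> omega
    have hc := Finset.card_le_one.1
      (card7 (ga (fun i j => M i (j + t)) 7 6) (Nat.ofBits_lt_two_pow _))
      _ (mem f hf) _ (mem f' hf')
    exact ge_inj _ _ _ _ _ hc j hj1 (by omega)
  have a0 : ∀ j, 1 ≤ j → j ≤ 9 → f j = f' j := by
    intro j hj1 hj2
    have := main 0 (by norm_num) j hj1 hj2
    simpa [h1] using this
  intro j hj1 hj2
  by_cases h9 : j ≤ 9
  · exact a0 j hj1 h9
  · have := main 2 (by norm_num) (j - 2) (by omega) (by omega)
    rw [show j - 2 + 2 = j by omega, a0 (1 + 2) (by norm_num) (by norm_num)] at this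
    simpa using this

open Classical in
theorem card12 (M : ℕ → ℕ → Bool) (W : Finset (Finset ℕ)) (hW : ∀ K ∈ W, K ⊆ Finset.Icc 2 12)
    (hg : ∀ K ∈ W, Good M (chi K)) : W.card ≤ 12 := by
  set W0 := W.filter (fun K => 12 ∉ K) with hW0
  set W1 := W.filter (fun K => ¬ 12 ∉ K) with hW1
  have hsum : W0.card + W1.card = W.card := Finset.card_filter_add_card_filter_not _
  have hinj : (W1.image (fun K => K.erase 12)).card = W1.card := by
    refine Finset.card_image_of_injOn ?_
    intro K hK K' hK' he
    have a := (Finset.mem_filter.1 (Finset.mem_coe.1 hK)).2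
    have b := (Finset.mem_filter.1 (Finset.mem_coe.1 hK')).2
    push Not at a b
    rw [← Finset.insert_erase a, ← Finset.insert_erase b]
    exact congrArg (insert 12) he
  set V := W1.image (fun K => K.erase 12) with hV
  have hu : (W0 ∪ V).card ≤ 11 := by
    have hK : ∀ K ∈ W0 ∪ V, ∃ K1 ∈ W, K = K1.erase 12 := by
      intro K hK
      rcases Finset.mem_union.1 hK with h | h
      · have := Finset.mem_filter.1 h
        exact ⟨K, this.1, (Finset.erase_eq_of_notMem this.2).symm⟩
      · obtain ⟨K1, h1, h2⟩ := Finset.mem_image.1 h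
        exact ⟨K1, (Finset.mem_filter.1 h1).1, h2.symm⟩
    refine card11 M _ ?_ ?_
    · intro K hKK
      obtain ⟨K1, h1, rfl⟩ := hK K hKK
      intro j hj
      have h2 := Finset.mem_erase.1 hj
      have h3 := Finset.mem_Icc.1 (hW K1 h1 h2.2)
      exact Finset.mem_Icc.2 (by omega)
    · intro K hKK c hc
      obtain ⟨K1, h1, rfl⟩ := hK K hKK
      obtain ⟨i1, i2, i3⟩ := hc
      rw [← hg K1 h1 c ⟨i1, i2, fun j hj => ⟨(i3 j hj).1, by have := (i3 j hj).2; omega⟩⟩]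
      refine circ_eq _ _ false c fun i j hj => ?_
      have := (i3 j hj).2
      have h12 : j ≠ 12 := by omega
      simp [chi, h12]
  have hi : (W0 ∩ V).card ≤ 1 := by
    have dbl : ∀ K ∈ W0 ∩ V, ∀ c, Inc 11 8 c →
        circ boolOps (fun i j => M i j ^^ chi K j) c = true := by
      intro K hK c hc
      obtain ⟨h0, h1⟩ := Finset.mem_inter.1 hK
      obtain ⟨h0a, h0b⟩ := Finset.mem_filter.1 h0
      obtain ⟨K1, hK1, he⟩ := Finset.mem_image.1 h1
      obtain ⟨h1a, h1b⟩ := Finset.mem_filter.1 hK1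
      push Not at h1b
      obtain ⟨i1, i2, i3⟩ := hc
      have hinc : Inc 12 9 (c ++ [12]) := by
        refine ⟨by simp [i1], ?_, ?_⟩
        · rw [List.pairwise_append]
          refine ⟨i2, by simp, ?_⟩
          intro a ha b hb
          have := (i3 a ha).2
          simp at hb
          omega
        · intro j hj
          rcases List.mem_append.1 hj with h | h
          · have := i3 j h; omega
          · simp at h; omega
      refine circ_double _ (fun i j => M i j ^^ chi K1 j) 12 ?_ c i1 ?_ (hg K h0a _ hinc)
        (hg K1 h1a _ hinc)
      · intro i
        simp [chi, h0b, h1b]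
      · intro i j hj
        have := (i3 j hj).2
        have h12 : j ≠ 12 := by omega
        simp [chi, ← he, h12]
    rw [Finset.card_le_one]
    intro K hK K' hK'
    have hs : ∀ K ∈ W0 ∩ V, K ⊆ Finset.Icc 2 11 := by
      intro K hK j hj
      obtain ⟨h0a, h0b⟩ := Finset.mem_filter.1 (Finset.mem_inter.1 hK).1
      have h3 := Finset.mem_Icc.1 (hW K h0a hj)
      have : j ≠ 12 := by rintro rfl; exact h0b hj
      exact Finset.mem_Icc.2 (by omega)
    have n1 : ∀ K ∈ W0 ∩ V, chi K 1 = false := by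
      intro K hK
      simp only [chi, decide_eq_false_iff_not]; intro h
      have := Finset.mem_Icc.1 (hs K hK h); omega
    have key := double_unique M (chi K) (chi K') (dbl K hK) (dbl K' hK')
      (by rw [n1 K hK, n1 K' hK'])
    ext j
    constructor
    · intro hj
      have := Finset.mem_Icc.1 (hs K hK hj)
      have := key j (by omega) (by omega)
      simpa [chi, hj] using this.symm
    · intro hj
      have := Finset.mem_Icc.1 (hs K' hK' hj)
      have := key j (by omega) (by omega)
      simpa [chi, hj] using this
  have := Finset.card_union_add_card_inter W0 V
  omega

/-! ### Travels are determined by reorientations up to global sign -/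

theorem ttEntry_pos (A : ℕ → ℕ → ℤ) (n : ℕ) : ∀ i c, ttEntry A n i = some c → 1 ≤ c
  | 0, c, h => by simp [ttEntry] at h
  | 1, c, h => by simp [ttEntry] at h; omega
  | i + 2, c, h => by
      simp only [ttEntry] at h
      obtain ⟨d, _, h2⟩ := Option.bind_eq_some_iff.1 h
      unfold rowChange at h2
      have := List.find?_some h2
      simp at this
      omega

theorem ttEntry_congr (B B' : ℕ → ℕ → ℤ) (n : ℕ) (hn : 1 ≤ n) (σ : ℤ) (hσ : σ ≠ 0)
    (h : ∀ i j, 1 ≤ j → j ≤ n → B i j = σ * B' i j) :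
    ∀ i, ttEntry B n i = ttEntry B' n i ∧ ∀ c, ttEntry B' n i = some c → c ≤ n
  | 0 => by simp [ttEntry]
  | 1 => by simp [ttEntry]; omega
  | i + 2 => by
      obtain ⟨h1, h2⟩ := ttEntry_congr B B' n hn σ hσ h (i + 1)
      constructor
      · simp only [ttEntry]
        rw [h1]
        cases hc : ttEntry B' n (i + 1) with
        | none => rfl
        | some c =>
          have c1 := ttEntry_pos B' n _ c hc
          have c2 := h2 c hc
          simp only [Option.bind_some]
          unfold rowChange
          refine List.find?_congr fun x hx => ?_
          have hx' := List.mem_range.1 hx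
          by_cases hcx : c < x
          · rw [h _ x (by omega) (by omega), h _ c c1 c2]
            simp [hσ]
          · simp [hcx]
      · intro c hc
        simp only [ttEntry] at hc
        obtain ⟨d, _, h3⟩ := Option.bind_eq_some_iff.1 hc
        unfold rowChange at h3
        have := List.mem_range.1 (List.mem_of_find?_eq_some h3)
        omega

theorem follows_mem (B : ℕ → ℕ → ℤ) (n : ℕ) (D : Finset ℕ) (h : ttFollows B n D) (c : ℕ) :
    c ∈ D ↔ ∃ i, 2 ≤ i ∧ ttEntry B n i = some c := by
  rw [h.2 c]
  constructor
  · rintro ⟨i, h1, _, h3⟩; exact ⟨i, h1, h3⟩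
  · rintro ⟨i, h1, h3⟩
    refine ⟨i, h1, ?_, h3⟩
    by_contra hlt
    have none_of : ∀ k, ttEntry B n (D.card + 2 + k) = none := by
      intro k
      induction k with
      | zero => exact h.1
      | succ k ih =>
        rw [show D.card + 2 + (k + 1) = D.card + 1 + k + 2 by omega]
        simp only [ttEntry]
        rw [show D.card + 1 + k + 1 = D.card + 2 + k by omega, ih]; rfl
    have := none_of (i - (D.card + 2))
    rw [show D.card + 2 + (i - (D.card + 2)) = i by omega, h3] at this
    cases this

/-- normal form of a reorientation -/
def nf (R : Finset ℕ) : Finset ℕ := (Finset.Icc 2 12).filter (fun j => (chi R j ^^ chi R 1) = true)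

theorem chi_nf (R : Finset ℕ) (j : ℕ) (h1 : 1 ≤ j) (h2 : j ≤ 12) :
    chi (nf R) j = (chi R j ^^ chi R 1) := by
  by_cases hj : j = 1
  · subst hj; simp [chi, nf]
  · have : 2 ≤ j := by omega
    have e : (j ∈ nf R) ↔ (chi R j ^^ chi R 1) = true := by
      unfold nf
      rw [Finset.mem_filter, Finset.mem_Icc]
      tauto
    unfold chi at e ⊢
    rw [Bool.eq_iff_iff, decide_eq_true_iff]
    exact e

theorem nf_inj (A : ℕ → ℕ → ℤ) (R R' D D' : Finset ℕ) (h : nf R = nf R')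
    (hD : ttFollows (reorient A R) 12 D) (hD' : ttFollows (reorient A R') 12 D') : D = D' := by
  have key : ∀ j, 1 ≤ j → j ≤ 12 → (chi R j ^^ chi R 1) = (chi R' j ^^ chi R' 1) := by
    intro j h1 h2
    rw [← chi_nf R j h1 h2, ← chi_nf R' j h1 h2, h]
  have hr : ∀ R i j, reorient A R i j = (if chi R j = true then -1 else 1) * A i j := by
    intro R i j
    unfold reorient chi
    by_cases hj : j ∈ R <;> simp [hj]
  have cong := ttEntry_congr (reorient A R) (reorient A R') 12 (by norm_num)
    (if (chi R 1 ^^ chi R' 1) = true then -1 else 1) (by split <;> norm_num) (by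
      intro i j h1 h2
      rw [hr, hr, ← mul_assoc]
      congr 1
      have := key j h1 h2
      revert this
      cases chi R j <;> cases chi R 1 <;> cases chi R' j <;> cases chi R' 1 <;> simp)
  ext c
  rw [follows_mem _ _ _ hD, follows_mem _ _ _ hD']
  simp only [(cong _).1]

theorem good_nf (A : ℕ → ℕ → ℤ) (hA : IsSignMatrix 8 12 A) (R : Finset ℕ)
    (hN : IsNeighborly (reorient A R) 8 12 3) :
    Good (fun i j => decide (A i j = -1)) (chi (nf R)) := by
  intro c hc
  rw [← circ_true (reorient A R) (fun i j => decide (A i j = -1) ^^ chi R j) ?_ hN c hc]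
  · refine circ_eq _ _ (chi R 1) c fun i j hj => ?_
    have := hc.2.2 j hj
    rw [chi_nf R j this.1 this.2]
    simp
  · intro i j h1 h2 h3 h4
    unfold reorient chi
    rcases hA i j h1 h2 h3 h4 with h | h <;> by_cases hj : j ∈ R <;> simp [h, hj]

end LT

/-- Every 8×12 sign matrix has at most 12 3-neighborly plain travels. -/
theorem statement_16 (A : ℕ → ℕ → ℤ) (hA : IsSignMatrix 8 12 A) :
    {D : Finset ℕ | IsPlainTravel 8 12 D ∧ IsNeighborlyTravel A 8 12 3 D}.ncard ≤ 12 := by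
  classical
  set X := {D : Finset ℕ | IsPlainTravel 8 12 D ∧ IsNeighborlyTravel A 8 12 3 D} with hX
  have hR : ∀ D : Finset ℕ, ∃ R : Finset ℕ, D ∈ X → ttFollows (reorient A R) 12 D ∧
      IsNeighborly (reorient A R) 8 12 3 := by
    intro D
    by_cases hD : D ∈ X
    · obtain ⟨R, _, h1, h2⟩ := hD.2
      exact ⟨R, fun _ => ⟨h1, h2⟩⟩
    · exact ⟨∅, fun h => absurd h hD⟩
  choose F hF using hR
  set W : Finset (Finset ℕ) := (Finset.Icc 2 12).powerset.filter
    (fun K => LT.Good (fun i j => decide (A i j = -1)) (LT.chi K)) with hW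
  have hcard : W.card ≤ 12 := by
    refine LT.card12 (fun i j => decide (A i j = -1)) W ?_ ?_
    · intro K hK
      exact Finset.mem_powerset.1 (Finset.mem_filter.1 hK).1
    · intro K hK
      exact (Finset.mem_filter.1 hK).2
  refine le_trans ?_ hcard
  rw [← Set.ncard_coe_finset]
  refine Set.ncard_le_ncard_of_injOn (fun D => LT.nf (F D)) ?_ ?_ (Finset.finite_toSet W)
  · intro D hD
    rw [Finset.mem_coe, hW, Finset.mem_filter, Finset.mem_powerset]
    exact ⟨Finset.filter_subset _ _, LT.good_nf A hA (F D) (hF D hD).2⟩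
  · intro D hD D' hD' he
    exact LT.nf_inj A (F D) (F D') D D' he (hF D hD).1 (hF D' hD').1
end
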